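/- arXiv:1310.0701 — 5 statements merged into one kernel-verified Lean document; each statement's English description precedes it below -/
import Mathlib

section
/- Let G be a compact Hausdorff topological group with normalized Haar probability measure μ, and let φ : G → ℝ be continuous. Then the kernel (g,h) ↦ φ(g h⁻¹) is restricted negative definite on G (i.e. for every n, all g₁,…,gₙ ∈ G and all ξ₁,…,ξₙ ∈ ℂ with ∑ᵢ ξᵢ = 0, the real part of ∑_{i,j} φ(gᵢ gⱼ⁻¹) ξᵢ conj(ξⱼ) is ≤ 0) if and only if for every continuous function f : G → ℂ with ∫_G f dμ = 0 one has Re ( ∫_G ∫_G φ(g h⁻¹) f(g) conj(f(h)) dμ(g) dμ(h) ) ≤ 0. -/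
section NegDefAux

open Finset MeasureTheory

variable {X : Type*} [TopologicalSpace X] [CompactSpace X] [T2Space X] [MeasurableSpace X]
  [BorelSpace X]

lemma nda_int {E : Type*} [NormedAddCommGroup E] (μ : Measure X) [IsFiniteMeasure μ]
    {f : X → E} (hf : Continuous f) : Integrable f μ :=
  hf.integrable_of_hasCompactSupport (HasCompactSupport.of_compactSpace f)

lemma nda_cont {E : Type*} [NormedAddCommGroup E] [NormedSpace ℝ E]
    (μ : Measure X) [IsFiniteMeasure μ]
    {F : X → X → E} (hF : Continuous (fun p : X × X => F p.1 p.2)) :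
    Continuous (fun x => ∫ y, F x y ∂μ) := by
  rw [← continuousOn_univ]
  exact continuousOn_integral_of_compact_support isCompact_univ hF.continuousOn
    (fun p x _ hx => absurd (Set.mem_univ x) hx)

/-- Estimate for a single pair. -/
lemma nda_A (μ : Measure X) [IsFiniteMeasure μ] {K : X → X → ℝ}
    (hK : Continuous (fun p : X × X => K p.1 p.2)) {a b : X → ℂ} (ha : Continuous a)
    (hb : Continuous b) {ε c : ℝ}
    (h : ∀ x y, a x ≠ 0 → b y ≠ 0 → |K x y - c| ≤ ε) :
    ‖(∫ x, ∫ y, (K x y : ℂ) * a x * (starRingEnd ℂ) (b y) ∂μ ∂μ)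
      - (c : ℂ) * (∫ x, a x ∂μ) * (starRingEnd ℂ) (∫ x, b x ∂μ)‖
      ≤ ε * ((∫ x, ‖a x‖ ∂μ) * ∫ x, ‖b x‖ ∂μ) := by
  have hK' : ∀ x, Continuous (K x) := fun x => hK.comp (Continuous.prodMk_right x)
  have e1 : (c : ℂ) * (∫ x, a x ∂μ) * (starRingEnd ℂ) (∫ x, b x ∂μ)
      = ∫ x, ∫ y, (c : ℂ) * a x * (starRingEnd ℂ) (b y) ∂μ ∂μ := by
    simp only [integral_const_mul, integral_mul_const, integral_conj]
  have e2 : ε * ((∫ x, ‖a x‖ ∂μ) * ∫ x, ‖b x‖ ∂μ) = ∫ x, ∫ y, ε * ‖a x‖ * ‖b y‖ ∂μ ∂μ := by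
    simp only [integral_const_mul, integral_mul_const]; ring
  have hc : ∀ k : X → X → ℝ, Continuous (fun p : X × X => k p.1 p.2) →
      Continuous (fun p : X × X => (k p.1 p.2 : ℂ) * a p.1 * (starRingEnd ℂ) (b p.2)) := by
    intro k hk
    exact ((Complex.continuous_ofReal.comp hk).mul (ha.comp continuous_fst)).mul
      (Complex.continuous_conj.comp (hb.comp continuous_snd))
  have hcx : ∀ k : X → X → ℝ, Continuous (fun p : X × X => k p.1 p.2) → ∀ x,
      Continuous (fun y => (k x y : ℂ) * a x * (starRingEnd ℂ) (b y)) := by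
    intro k hk x
    exact (hc k hk).comp (Continuous.prodMk_right x)
  have hcc : Continuous (fun p : X × X => (fun _ _ => c : X → X → ℝ) p.1 p.2) := continuous_const
  rw [e1, e2, ← integral_sub (nda_int μ (nda_cont μ (hc K hK)))
    (nda_int μ (nda_cont μ (hc (fun _ _ => c) hcc)))]
  refine norm_integral_le_of_norm_le (nda_int μ ?_) (Filter.Eventually.of_forall fun x => ?_)
  · simp only [integral_const_mul]
    fun_prop
  rw [← integral_sub (nda_int μ (hcx K hK x)) (nda_int μ (hcx (fun _ _ => c) hcc x))]
  refine norm_integral_le_of_norm_le (nda_int μ ?_) (Filter.Eventually.of_forall fun y => ?_)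
  · fun_prop
  have : (K x y : ℂ) * a x * (starRingEnd ℂ) (b y) - (c : ℂ) * a x * (starRingEnd ℂ) (b y)
      = ((K x y - c : ℝ) : ℂ) * a x * (starRingEnd ℂ) (b y) := by push_cast; ring
  rw [this, norm_mul, norm_mul, Complex.norm_real, Real.norm_eq_abs, RCLike.norm_conj]
  by_cases hx : a x = 0
  · simp [hx]
  by_cases hy : b y = 0
  · simp [hy]
  have := h x y hx hy
  gcongr

lemma nda_C (μ : Measure X) [IsFiniteMeasure μ] {K : X → X → ℝ}
    (hK : Continuous (fun p : X × X => K p.1 p.2)) {n : ℕ} {a : Fin n → X → ℂ}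
    (ha : ∀ i, Continuous (a i)) {ε : ℝ} (p : Fin n → X)
    (h : ∀ i j x y, a i x ≠ 0 → a j y ≠ 0 → |K x y - K (p i) (p j)| ≤ ε) :
    ‖(∫ x, ∫ y, (K x y : ℂ) * (∑ i, a i x) * (starRingEnd ℂ) (∑ i, a i y) ∂μ ∂μ)
      - ∑ i, ∑ j, (K (p i) (p j) : ℂ) * (∫ x, a i x ∂μ) * (starRingEnd ℂ) (∫ x, a j x ∂μ)‖
      ≤ ε * (∑ i, ∫ x, ‖a i x‖ ∂μ) ^ 2 := by
  have hc : ∀ i j, Continuous (fun p : X × X =>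
      (K p.1 p.2 : ℂ) * a i p.1 * (starRingEnd ℂ) (a j p.2)) := by
    intro i j
    exact ((Complex.continuous_ofReal.comp hK).mul ((ha i).comp continuous_fst)).mul
      (Complex.continuous_conj.comp ((ha j).comp continuous_snd))
  have hcx : ∀ i j x, Continuous (fun y =>
      (K x y : ℂ) * a i x * (starRingEnd ℂ) (a j y)) := by
    intro i j x
    exact (hc i j).comp (Continuous.prodMk_right x)
  have e : (∫ x, ∫ y, (K x y : ℂ) * (∑ i, a i x) * (starRingEnd ℂ) (∑ i, a i y) ∂μ ∂μ)
      = ∑ i, ∑ j, ∫ x, ∫ y, (K x y : ℂ) * a i x * (starRingEnd ℂ) (a j y) ∂μ ∂μ := by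
    have e1 : ∀ x, (∫ y, (K x y : ℂ) * (∑ i, a i x) * (starRingEnd ℂ) (∑ i, a i y) ∂μ)
        = ∑ i, ∑ j, ∫ y, (K x y : ℂ) * a i x * (starRingEnd ℂ) (a j y) ∂μ := by
      intro x
      have e2 : ∀ y, (K x y : ℂ) * (∑ i, a i x) * (starRingEnd ℂ) (∑ i, a i y)
          = ∑ i, ∑ j, (K x y : ℂ) * a i x * (starRingEnd ℂ) (a j y) := by
        intro y
        rw [map_sum, Finset.mul_sum Finset.univ (fun i => a i x), Finset.sum_mul_sum]
      simp only [e2]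
      rw [integral_finsetSum _ (fun i _ => nda_int μ (continuous_finsetSum _ fun j _ => hcx i j x))]
      exact Finset.sum_congr rfl fun i _ =>
        integral_finsetSum _ (fun j _ => nda_int μ (hcx i j x))
    simp only [e1]
    rw [integral_finsetSum _ (fun i _ => nda_int μ
      (continuous_finsetSum _ fun j _ => nda_cont μ (hc i j)))]
    exact Finset.sum_congr rfl fun i _ =>
      integral_finsetSum _ (fun j _ => nda_int μ (nda_cont μ (hc i j)))
  rw [e, ← Finset.sum_sub_distrib, sq, Finset.sum_mul_sum, Finset.mul_sum]
  refine (norm_sum_le _ _).trans (Finset.sum_le_sum fun i _ => ?_)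
  rw [← Finset.sum_sub_distrib, Finset.mul_sum]
  refine (norm_sum_le _ _).trans (Finset.sum_le_sum fun j _ => ?_)
  exact nda_A μ hK (ha i) (ha j) (h i j)

lemma nda_D {K : X → X → ℝ} (hK : Continuous (fun p : X × X => K p.1 p.2)) {ε : ℝ} (hε : 0 < ε) :
    ∃ N : X → Set X, (∀ x, IsOpen (N x)) ∧ (∀ x, x ∈ N x) ∧
      ∀ p q x y, x ∈ N p → y ∈ N q → |K x y - K p q| ≤ ε := by
  letI : UniformSpace X := uniformSpaceOfCompactR1
  have hu := CompactSpace.uniformContinuous_of_continuous hK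
  rw [uniformContinuous_def] at hu
  have h2 := hu _ (Metric.dist_mem_uniformity hε)
  rw [uniformity_prod_eq_comap_prod, Filter.mem_comap] at h2
  obtain ⟨T, hT, hTs⟩ := h2
  obtain ⟨V, hV, hVT⟩ := Filter.mem_prod_same_iff.1 hT
  refine ⟨fun x => interior (UniformSpace.ball x V), fun x => isOpen_interior,
    fun x => mem_interior_iff_mem_nhds.2 (UniformSpace.ball_mem_nhds x hV), ?_⟩
  intro p q x y hx hy
  have hx' : (p, x) ∈ V := (interior_subset hx : x ∈ UniformSpace.ball p V)
  have hy' : (q, y) ∈ V := (interior_subset hy : y ∈ UniformSpace.ball q V)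
  have := @hTs ((p, q), (x, y)) (hVT ⟨hx', hy'⟩)
  have h3 : dist (K p q) (K x y) < ε := this
  rw [dist_comm, Real.dist_eq] at h3
  exact h3.le

lemma nda_fwd (μ : Measure X) [IsFiniteMeasure μ] {K : X → X → ℝ}
    (hK : Continuous (fun p : X × X => K p.1 p.2))
    (H : ∀ (n : ℕ) (g : Fin n → X) (ξ : Fin n → ℂ), (∑ i, ξ i) = 0 →
        (∑ i, ∑ j, (K (g i) (g j) : ℂ) * ξ i * (starRingEnd ℂ) (ξ j)).re ≤ 0)
    (f : C(X, ℂ)) (hf : (∫ g, f g ∂μ) = 0) :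
    (∫ g, ∫ h, (K g h : ℂ) * f g * (starRingEnd ℂ) (f h) ∂μ ∂μ).re ≤ 0 := by
  have key : ∀ ε : ℝ, 0 < ε → (∫ g, ∫ h, (K g h : ℂ) * f g * (starRingEnd ℂ) (f h) ∂μ ∂μ).re
      ≤ ε * (∫ x, ‖f x‖ ∂μ) ^ 2 := by
    intro ε hε
    obtain ⟨N, hNo, hNm, hN⟩ := nda_D hK hε
    obtain ⟨t, ht⟩ := isCompact_univ.elim_finite_subcover N hNo
      (fun x _ => Set.mem_iUnion.2 ⟨x, hNm x⟩)
    let p : Fin t.card → X := fun i => (t.equivFin.symm i : X)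
    have hcov : (Set.univ : Set X) ⊆ ⋃ i, N (p i) := by
      intro x hx
      obtain ⟨y, hy, hxy⟩ := Set.mem_iUnion₂.1 (ht hx)
      exact Set.mem_iUnion.2 ⟨t.equivFin ⟨y, hy⟩, by simpa [p] using hxy⟩
    obtain ⟨w, hws, hw1, hw01, -⟩ := exists_continuous_sum_one_of_isOpen_isCompact
      (fun i => hNo (p i)) isCompact_univ hcov
    have hsum : ∀ x, ∑ i, w i x = 1 := fun x => by simpa using hw1 (Set.mem_univ x)
    have ha : ∀ i, Continuous (fun x => (w i x : ℂ) * f x) := fun i => by fun_prop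
    have hC := nda_C μ hK ha (ε := ε) p (by
      intro i j x y hx hy
      refine hN _ _ _ _ (hws i (subset_tsupport _ ?_)) (hws j (subset_tsupport _ ?_))
      · intro h0; simp [h0] at hx
      · intro h0; simp [h0] at hy)
    have hfs : ∀ x, ∑ i, (w i x : ℂ) * f x = f x := fun x => by
      rw [← Finset.sum_mul, ← Complex.ofReal_sum, hsum]; simp
    have hns : ∑ i, ∫ x, ‖(w i x : ℂ) * f x‖ ∂μ = ∫ x, ‖f x‖ ∂μ := by
      rw [← integral_finsetSum _ (fun i _ => nda_int μ (ha i).norm)]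
      refine integral_congr_ae (Filter.Eventually.of_forall fun x => ?_)
      simp only [norm_mul, Complex.norm_real, ← Finset.sum_mul]
      rw [Finset.sum_congr rfl (fun i _ => Real.norm_of_nonneg (hw01 i x).1), hsum, one_mul]
    simp only [hfs, hns] at hC
    have hS := H _ p (fun i => ∫ x, (w i x : ℂ) * f x ∂μ) (by
      rw [← integral_finsetSum _ (fun i _ => nda_int μ (ha i))]
      simpa only [hfs] using hf)
    have := (Complex.re_le_norm _).trans hC
    rw [Complex.sub_re] at this
    linarith
  refine le_of_forall_pos_le_add fun δ hδ => ?_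
  have hC0 : 0 ≤ (∫ x, ‖f x‖ ∂μ) ^ 2 := sq_nonneg _
  refine (key (δ / ((∫ x, ‖f x‖ ∂μ) ^ 2 + 1)) (by positivity)).trans ?_
  rw [zero_add, div_mul_eq_mul_div, div_le_iff₀ (by positivity)]
  nlinarith

lemma nda_bwd (μ : Measure X) [IsFiniteMeasure μ] [μ.IsOpenPosMeasure] {K : X → X → ℝ}
    (hK : Continuous (fun p : X × X => K p.1 p.2))
    (H : ∀ f : C(X, ℂ), (∫ g, f g ∂μ) = 0 →
      (∫ g, ∫ h, (K g h : ℂ) * f g * (starRingEnd ℂ) (f h) ∂μ ∂μ).re ≤ 0)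
    (n : ℕ) (p : Fin n → X) (ξ : Fin n → ℂ) (hξ : (∑ i, ξ i) = 0) :
    (∑ i, ∑ j, (K (p i) (p j) : ℂ) * ξ i * (starRingEnd ℂ) (ξ j)).re ≤ 0 := by
  have key : ∀ ε : ℝ, 0 < ε →
      (∑ i, ∑ j, (K (p i) (p j) : ℂ) * ξ i * (starRingEnd ℂ) (ξ j)).re
      ≤ ε * (∑ i, ‖ξ i‖) ^ 2 := by
    intro ε hε
    obtain ⟨N, hNo, hNm, hN⟩ := nda_D hK hε
    have hbump : ∀ i, ∃ v : C(X, ℝ), (∀ x, 0 ≤ v x) ∧ (∀ x, v x ≠ 0 → x ∈ N (p i)) ∧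
        ∫ x, v x ∂μ = 1 := by
      intro i
      obtain ⟨u, hu1, hu0, huc, hu01⟩ := exists_continuous_one_zero_of_isCompact
        (isCompact_singleton (x := p i)) (hNo (p i)).isClosed_compl
        (by simpa using hNm (p i))
      have hpos : 0 < ∫ x, u x ∂μ :=
        u.continuous.integral_pos_of_hasCompactSupport_nonneg_nonzero huc
          (fun x => (hu01 x).1) (x := p i) (by rw [hu1 rfl]; simp)
      refine ⟨⟨fun x => (∫ x, u x ∂μ)⁻¹ * u x, by fun_prop⟩, fun x => ?_, fun x hx => ?_, ?_⟩
      · exact mul_nonneg (inv_nonneg.2 hpos.le) (hu01 x).1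
      · by_contra hxN
        exact hx (by simp [hu0 hxN])
      · simp only [ContinuousMap.coe_mk, integral_const_mul]
        exact inv_mul_cancel₀ hpos.ne'
    choose v hv0 hvN hv1 using hbump
    have ha : ∀ i, Continuous (fun x => ξ i * (v i x : ℂ)) := fun i => by fun_prop
    have hC := nda_C μ hK ha (ε := ε) p (by
      intro i j x y hx hy
      refine hN _ _ _ _ (hvN i x ?_) (hvN j y ?_)
      · intro h0; simp [h0] at hx
      · intro h0; simp [h0] at hy)
    have hI : ∀ i, ∫ x, ξ i * (v i x : ℂ) ∂μ = ξ i := fun i => by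
      rw [integral_const_mul, integral_complex_ofReal, hv1]; simp
    have hn : ∀ i, ∫ x, ‖ξ i * (v i x : ℂ)‖ ∂μ = ‖ξ i‖ := fun i => by
      simp only [norm_mul, Complex.norm_real, Real.norm_of_nonneg (hv0 i _)]
      rw [integral_const_mul, hv1, mul_one]
    simp only [hI, hn] at hC
    have hS := H ⟨fun x => ∑ i, ξ i * (v i x : ℂ), by fun_prop⟩ (by
      simp only [ContinuousMap.coe_mk]
      rw [integral_finsetSum _ (fun i _ => nda_int μ (ha i))]
      simpa only [hI] using hξ)
    simp only [ContinuousMap.coe_mk] at hS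
    rw [norm_sub_rev] at hC
    have := (Complex.re_le_norm _).trans hC
    rw [Complex.sub_re] at this
    linarith
  refine le_of_forall_pos_le_add fun δ hδ => ?_
  have hC0 : 0 ≤ (∑ i, ‖ξ i‖) ^ 2 := sq_nonneg _
  refine (key (δ / ((∑ i, ‖ξ i‖) ^ 2 + 1)) (by positivity)).trans ?_
  rw [zero_add, div_mul_eq_mul_div, div_le_iff₀ (by positivity)]
  nlinarith

end NegDefAux


open Finset MeasureTheory in
/-- On a compact group `G` with normalized Haar probability measure `μ`, a continuous
function `φ` gives a restricted negative definite kernel `(g,h) ↦ φ(g h⁻¹)` iff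
`Re ∬ φ(g h⁻¹) f(g) conj(f(h)) dμ dμ ≤ 0` for every continuous `f : G → ℂ` of mean zero. -/
theorem continuous_restricted_negdef_iff_integral
    {G : Type*} [Group G] [TopologicalSpace G] [IsTopologicalGroup G]
    [CompactSpace G] [T2Space G] [MeasurableSpace G] [BorelSpace G]
    (μ : Measure G) [μ.IsHaarMeasure] [IsProbabilityMeasure μ]
    (φ : G → ℝ) (hφ : Continuous φ) :
    (∀ (n : ℕ) (g : Fin n → G) (ξ : Fin n → ℂ), (∑ i, ξ i) = 0 →
        (∑ i, ∑ j,
          ((φ (g i * (g j)⁻¹) : ℝ) : ℂ) * ξ i * (starRingEnd ℂ) (ξ j)).re ≤ 0) ↔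
      (∀ f : C(G, ℂ), (∫ g, f g ∂μ) = 0 →
        (∫ g, ∫ h, ((φ (g * h⁻¹) : ℝ) : ℂ) * f g * (starRingEnd ℂ) (f h) ∂μ ∂μ).re ≤ 0) := by
  have hK : Continuous (fun p : G × G => (fun g h => φ (g * h⁻¹)) p.1 p.2) := by
    fun_prop
  exact ⟨fun H f hf => nda_fwd (K := fun g h => φ (g * h⁻¹)) μ hK H f hf, fun H n g ξ hξ => nda_bwd (K := fun g h => φ (g * h⁻¹)) μ hK H n g ξ hξ⟩
end

section
/- Let SU(2) be the group of 2×2 complex special unitary matrices with normalized Haar probability measure μ, and define θ : SU(2) → [0,π] by θ(g) = arccos(Re(tr g)/2). Then the pushforward measure θ_*μ is absolutely continuous with respect to Lebesgue measure with density t ↦ (2/π) sin²(t) on [0,π]; equivalently, for every Borel set A ⊆ ℝ, μ({g : θ(g) ∈ A}) = ∫_{A ∩ [0,π]} (2/π) sin²(t) dt. -/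
/-- `SU(2)` as found in Mathlib is only a submonoid of the matrices; we endow it with its
natural group structure (the inverse being the conjugate transpose). -/
noncomputable instance : Group (Matrix.specialUnitaryGroup (Fin 2) ℂ) :=
  { (inferInstance : Monoid (Matrix.specialUnitaryGroup (Fin 2) ℂ)) with
    inv := fun g => ⟨star g.1, by
      rw [Matrix.mem_specialUnitaryGroup_iff]
      refine ⟨Unitary.star_mem g.2.1, ?_⟩
      have hdet : (g.1).det = 1 := g.2.2
      simp [Matrix.star_eq_conjTranspose, Matrix.det_conjTranspose, hdet]⟩
    inv_mul_cancel := fun g => by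
      apply Subtype.ext
      exact (Unitary.mem_iff.mp g.2.1).1 }

/-- `SU(2)` is a topological group. -/
instance : IsTopologicalGroup (Matrix.specialUnitaryGroup (Fin 2) ℂ) where
  continuous_mul := by
    apply Continuous.subtype_mk
    exact (continuous_mul.comp ((continuous_subtype_val.comp continuous_fst).prodMk
      (continuous_subtype_val.comp continuous_snd)))
  continuous_inv := by
    apply Continuous.subtype_mk
    exact continuous_star.comp continuous_subtype_val


namespace SU2Angle

open MeasureTheory Real

/-- Bounded random variables rotated into each other with invariance of a mixed moment. -/
theorem deriv_moment {Ω : Type*} [MeasurableSpace Ω] (P : Measure Ω) [IsProbabilityMeasure P]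
    (X Y : Ω → ℝ) (hX : Measurable X) (hY : Measurable Y)
    (bX : ∀ w, |X w| ≤ 1) (bY : ∀ w, |Y w| ≤ 1) (n : ℕ)
    (h : ∀ s : ℝ, ∫ w, (cos s * X w - sin s * Y w) ^ n * (cos s * Y w + sin s * X w) ∂P
      = ∫ w, X w ^ n * Y w ∂P) :
    ∫ w, X w ^ (n + 1) ∂P = ∫ w, n * X w ^ (n - 1) * Y w ^ 2 ∂P := by
  have b1 : ∀ (s : ℝ) w, |cos s * X w - sin s * Y w| ≤ 2 := by
    intro s w
    calc _ ≤ |cos s * X w| + |sin s * Y w| := abs_sub _ _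
      _ ≤ 1 * 1 + 1 * 1 := by
        rw [abs_mul, abs_mul]
        gcongr
        exacts [abs_cos_le_one s, bX w, abs_sin_le_one s, bY w]
      _ = 2 := by norm_num
  have b2 : ∀ (s : ℝ) w, |cos s * Y w + sin s * X w| ≤ 2 := by
    intro s w
    calc _ ≤ |cos s * Y w| + |sin s * X w| := abs_add_le _ _
      _ ≤ 1 * 1 + 1 * 1 := by
        rw [abs_mul, abs_mul]
        gcongr
        exacts [abs_cos_le_one s, bY w, abs_sin_le_one s, bX w]
      _ = 2 := by norm_num
  have key := hasDerivAt_integral_of_dominated_loc_of_deriv_le (μ := P) (𝕜 := ℝ) (E := ℝ)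
    (bound := fun _ => (n : ℝ) * 2 ^ (n - 1) * 2 * 2 + 2 ^ n * 2) (x₀ := 0) (s := Set.univ)
    (F := fun s w => (cos s * X w - sin s * Y w) ^ n * (cos s * Y w + sin s * X w))
    (F' := fun s w => ((n : ℝ) * (cos s * X w - sin s * Y w) ^ (n - 1)
      * (-(cos s * Y w + sin s * X w))) * (cos s * Y w + sin s * X w)
      + (cos s * X w - sin s * Y w) ^ n * (cos s * X w - sin s * Y w))
    Filter.univ_mem
    (Filter.Eventually.of_forall fun s => by
      apply Measurable.aestronglyMeasurable; fun_prop)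
    (by
      refine Integrable.of_bound (by apply Measurable.aestronglyMeasurable; fun_prop) (2 ^ n * 2)
        (Filter.Eventually.of_forall fun w => ?_)
      rw [Real.norm_eq_abs, abs_mul, abs_pow]
      gcongr
      exacts [b1 0 w, b2 0 w])
    (by apply Measurable.aestronglyMeasurable; fun_prop)
    (Filter.Eventually.of_forall fun w s _ => by
      rw [Real.norm_eq_abs]
      refine (abs_add_le _ _).trans ?_
      simp only [abs_mul, abs_pow, abs_neg, Nat.abs_cast]
      gcongr
      exacts [b1 s w, b2 s w, b2 s w, b1 s w, b1 s w])
    (integrable_const _)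
    (Filter.Eventually.of_forall fun w s _ => by
      have h1 : HasDerivAt (fun s => cos s * X w - sin s * Y w)
          (-(cos s * Y w + sin s * X w)) s := by
        refine HasDerivAt.congr_deriv
          (((hasDerivAt_cos s).mul_const (X w)).sub ((hasDerivAt_sin s).mul_const (Y w))) ?_
        ring
      have h2 : HasDerivAt (fun s => cos s * Y w + sin s * X w)
          (cos s * X w - sin s * Y w) s := by
        refine HasDerivAt.congr_deriv
          (((hasDerivAt_cos s).mul_const (Y w)).add ((hasDerivAt_sin s).mul_const (X w))) ?_
        ring
      exact (h1.pow n).mul h2)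
  have h0 := key.2
  simp only [h] at h0
  have h00 := h0.unique (hasDerivAt_const (0 : ℝ) _)
  simp only [cos_zero, sin_zero, one_mul, zero_mul, sub_zero, add_zero] at h00
  rw [integral_add] at h00
  · have e : ∀ w, (n : ℝ) * X w ^ (n - 1) * -Y w * Y w = -(n * X w ^ (n - 1) * Y w ^ 2) := by
      intro w; ring
    simp only [e, integral_neg, ← pow_succ] at h00
    linarith
  · refine Integrable.of_bound (by apply Measurable.aestronglyMeasurable; fun_prop)
      (n * 1 ^ (n - 1) * 1 * 1) (Filter.Eventually.of_forall fun w => ?_)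
    simp only [Real.norm_eq_abs, abs_mul, abs_pow, abs_neg, Nat.abs_cast]
    gcongr
    exacts [bX w, bY w, bY w]
  · refine Integrable.of_bound (by apply Measurable.aestronglyMeasurable; fun_prop)
      (1 ^ n * 1) (Filter.Eventually.of_forall fun w => ?_)
    simp only [Real.norm_eq_abs, abs_mul, abs_pow]
    gcongr
    exacts [bX w, bX w]

/-- Sine-squared moments recursion. -/
theorem sin_rec (n : ℕ) :
    ((n : ℝ) + 3) * ∫ t in (0)..π, cos t ^ (n + 1) * sin t ^ 2
      = n * ∫ t in (0)..π, cos t ^ (n - 1) * sin t ^ 2 := by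
  have h := intervalIntegral.integral_eq_sub_of_hasDerivAt (a := 0) (b := π)
    (f := fun t => cos t ^ n * sin t ^ 3)
    (f' := fun t => ((n : ℝ) + 3) * (cos t ^ (n + 1) * sin t ^ 2)
      - n * (cos t ^ (n - 1) * sin t ^ 2))
    (fun t _ => by
      refine HasDerivAt.congr_deriv
        (((hasDerivAt_cos t).pow n).mul ((hasDerivAt_sin t).pow 3)) ?_
      simp only [Pi.pow_apply]
      symm
      have hs : sin t ^ 2 = 1 - cos t ^ 2 := by linarith [sin_sq_add_cos_sq t]
      rcases n with _ | n
      · simp; ring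
      · simp only [Nat.add_sub_cancel]
        push_cast
        have : sin t ^ 4 = sin t ^ 2 * (1 - cos t ^ 2) := by rw [← hs]; ring
        linear_combination ((n : ℝ) + 1) * cos t ^ n * this)
    (by apply Continuous.intervalIntegrable; fun_prop)
  rw [intervalIntegral.integral_sub, intervalIntegral.integral_const_mul,
    intervalIntegral.integral_const_mul] at h
  · simp at h; linarith
  · apply Continuous.intervalIntegrable; fun_prop
  · apply Continuous.intervalIntegrable; fun_prop

/-- The sine-squared law. -/
noncomputable def sinLaw : Measure ℝ :=
  (volume.restrict (Set.Icc 0 π)).withDensity (fun t => ENNReal.ofReal (2 / π * sin t ^ 2))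

theorem dens_nonneg (t : ℝ) : 0 ≤ 2 / π * sin t ^ 2 := by
  have := pi_pos
  positivity

theorem sinLaw_apply (A : Set ℝ) (hA : MeasurableSet A) :
    sinLaw A = ENNReal.ofReal (∫ t in A ∩ Set.Icc 0 π, (2 / π) * sin t ^ 2) := by
  rw [sinLaw, withDensity_apply _ hA, Measure.restrict_restrict hA,
    ofReal_integral_eq_lintegral_ofReal]
  · have : IntegrableOn (fun t : ℝ => (2 / π) * sin t ^ 2) (Set.Icc 0 π) := by
      apply Continuous.integrableOn_Icc; fun_prop
    exact this.mono_set Set.inter_subset_right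
  · exact Filter.Eventually.of_forall dens_nonneg

theorem sinLaw_integral (f : ℝ → ℝ) :
    ∫ t, f t ∂sinLaw = ∫ t in (0)..π, 2 / π * sin t ^ 2 * f t := by
  rw [sinLaw, integral_withDensity_eq_integral_toReal_smul (by fun_prop) (by simp),
    intervalIntegral.integral_of_le pi_pos.le, integral_Icc_eq_integral_Ioc]
  simp only [ENNReal.toReal_ofReal (dens_nonneg _), smul_eq_mul]

instance : IsProbabilityMeasure sinLaw := by
  constructor
  rw [sinLaw_apply _ MeasurableSet.univ, Set.univ_inter, integral_Icc_eq_integral_Ioc,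
    ← intervalIntegral.integral_of_le pi_pos.le, intervalIntegral.integral_const_mul,
    integral_sin_sq]
  have := pi_pos.ne'
  simp [this]

theorem sinLaw_moment (n : ℕ) :
    ∫ t, cos t ^ n ∂sinLaw = 2 / π * ∫ t in (0)..π, cos t ^ n * sin t ^ 2 := by
  rw [sinLaw_integral, ← intervalIntegral.integral_const_mul]
  congr 1; ext t; ring

theorem sinLaw_rec (n : ℕ) :
    ((n : ℝ) + 3) * ∫ t, cos t ^ (n + 1) ∂sinLaw = n * ∫ t, cos t ^ (n - 1) ∂sinLaw := by
  rw [sinLaw_moment, sinLaw_moment]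
  linear_combination 2 / π * sin_rec n

theorem moments_unique (u v : ℕ → ℝ) (h0 : u 0 = v 0)
    (hu : ∀ n : ℕ, ((n : ℝ) + 3) * u (n + 1) = n * u (n - 1))
    (hv : ∀ n : ℕ, ((n : ℝ) + 3) * v (n + 1) = n * v (n - 1)) (n : ℕ) : u n = v n := by
  induction n using Nat.strong_induction_on with
  | _ n ih =>
    rcases n with _ | n
    · exact h0
    · have h1 := hu n
      rw [ih (n - 1) (by omega), ← hv n] at h1
      have : (n : ℝ) + 3 ≠ 0 := by positivity
      exact mul_left_cancel₀ this h1

theorem ext_moments (P Q : Measure ℝ) [IsProbabilityMeasure P] [IsProbabilityMeasure Q]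
    (hP : ∀ᵐ x ∂P, x ∈ Set.Icc (-1 : ℝ) 1) (hQ : ∀ᵐ x ∂Q, x ∈ Set.Icc (-1 : ℝ) 1)
    (h : ∀ n : ℕ, ∫ x, x ^ n ∂P = ∫ x, x ^ n ∂Q) : P = Q := by
  have ipow : ∀ (ρ : Measure ℝ) [IsProbabilityMeasure ρ], (∀ᵐ x ∂ρ, x ∈ Set.Icc (-1 : ℝ) 1) →
      ∀ n : ℕ, Integrable (fun x : ℝ => x ^ n) ρ := by
    intro ρ _ hR n
    refine Integrable.of_bound (by fun_prop) 1 ?_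
    filter_upwards [hR] with x hx
    rw [norm_pow]
    exact pow_le_one₀ (norm_nonneg _) (abs_le.2 hx)
  have ipoly : ∀ (ρ : Measure ℝ) [IsProbabilityMeasure ρ], (∀ᵐ x ∂ρ, x ∈ Set.Icc (-1 : ℝ) 1) →
      ∀ p : Polynomial ℝ, Integrable (fun x : ℝ => p.eval x) ρ := by
    intro ρ _ hR p
    simp only [Polynomial.eval_eq_sum_range]
    exact integrable_finsetSum _ fun i _ => (ipow ρ hR i).const_mul _
  have hp : ∀ p : Polynomial ℝ, ∫ x, p.eval x ∂P = ∫ x, p.eval x ∂Q := by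
    intro p
    simp only [Polynomial.eval_eq_sum_range]
    rw [integral_finsetSum _ fun i _ => (ipow P hP i).const_mul _,
      integral_finsetSum _ fun i _ => (ipow Q hQ i).const_mul _]
    simp only [integral_const_mul, h]
  have app : ∀ (ρ : Measure ℝ) [IsProbabilityMeasure ρ], (∀ᵐ x ∂ρ, x ∈ Set.Icc (-1 : ℝ) 1) →
      ∀ (p : Polynomial ℝ) (f : BoundedContinuousFunction ℝ ℝ) (ε : ℝ),
      (∀ x ∈ Set.Icc (-1 : ℝ) 1, |p.eval x - f x| < ε) →
      abs ((∫ x, p.eval x ∂ρ) - ∫ x, f x ∂ρ) ≤ ε := by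
    intro ρ _ hR p f ε hε
    rw [← integral_sub (ipoly ρ hR p) (f.integrable ρ)]
    have := norm_integral_le_of_norm_le_const (μ := ρ) (f := fun x => p.eval x - f x) (C := ε)
      (by filter_upwards [hR] with x hx using (hε x hx).le)
    simpa using this
  apply ext_of_forall_integral_eq_of_IsFiniteMeasure
  intro f
  refine eq_of_abs_sub_le_all fun ε hε => ?_
  obtain ⟨p, hpf⟩ := exists_polynomial_near_of_continuousOn (-1) 1 f f.continuous.continuousOn
    (ε / 2) (by positivity)
  have h1 := abs_le.1 (app P hP p f _ hpf)
  have h2 := abs_le.1 (app Q hQ p f _ hpf)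
  have h3 := hp p
  rw [abs_le]
  constructor <;> linarith [h1.1, h1.2, h2.1, h2.2]

/-- `SU(2)`. -/
abbrev G := Matrix.specialUnitaryGroup (Fin 2) ℂ

theorem star_eq_adj (g : G) : star g.1 = g.1.adjugate := by
  have hd : g.1.det = 1 := g.2.2
  have h1 : star g.1 * g.1 = 1 := (Unitary.mem_iff.mp g.2.1).1
  calc star g.1 = star g.1 * (g.1 * g.1.adjugate) := by rw [Matrix.mul_adjugate, hd]; simp
    _ = _ := by rw [← mul_assoc, h1, one_mul]

theorem g11 (g : G) : g.1 1 1 = star (g.1 0 0) := by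
  have := congrFun (congrFun (star_eq_adj g) 0) 0
  simpa [Matrix.adjugate_fin_two, Matrix.star_eq_conjTranspose] using this.symm

theorem g10 (g : G) : g.1 1 0 = - star (g.1 0 1) := by
  have := congrFun (congrFun (star_eq_adj g) 1) 0
  simp [Matrix.adjugate_fin_two, Matrix.star_eq_conjTranspose] at this
  simp [this]

theorem norm_eq (g : G) : (g.1 0 0).re ^ 2 + (g.1 0 0).im ^ 2 + (g.1 0 1).re ^ 2
    + (g.1 0 1).im ^ 2 = 1 := by
  have hd : g.1.det = 1 := g.2.2
  rw [Matrix.det_fin_two, g11, g10] at hd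
  have := congrArg Complex.re hd
  simp at this
  linarith

theorem trace_eq (g : G) : (Matrix.trace g.1).re / 2 = (g.1 0 0).re := by
  rw [Matrix.trace_fin_two, g11]
  simp

/-- The element of `SU(2)` with given first row. -/
noncomputable def mk (a b : ℂ) (h : a * star a + b * star b = 1) : G :=
  ⟨!![a, b; - star b, star a], by
    rw [Matrix.mem_specialUnitaryGroup_iff]
    refine ⟨?_, ?_⟩
    · rw [Matrix.mem_unitaryGroup_iff]
      ext i j
      fin_cases i <;> fin_cases j <;>
        simp [Matrix.mul_apply, Fin.sum_univ_two, Matrix.star_eq_conjTranspose] <;>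
        simp at h
      · exact h
      · ring
      · ring
      · linear_combination h
    · rw [Matrix.det_fin_two]
      simp at h ⊢
      linear_combination h⟩

theorem mk_mul (a b : ℂ) (h) (g : G) : (mk a b h * g).1 0 0 = a * g.1 0 0 - b * star (g.1 0 1)
    ∧ (mk a b h * g).1 0 1 = a * g.1 0 1 + b * star (g.1 0 0) := by
  have : (mk a b h * g).1 = !![a, b; - star b, star a] * g.1 := rfl
  rw [this]
  simp [Matrix.mul_apply, Fin.sum_univ_two, g11, g10]
  ring

theorem meas_entry [MeasurableSpace G] [BorelSpace G] (i j : Fin 2) :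
    Measurable fun g : G => g.1 i j := by
  have h : Continuous fun g : G => g.1 i j :=
    Continuous.matrix_elem (A := fun g : G => g.1) continuous_subtype_val i j
  exact h.measurable

theorem integral_add4 {Ω : Type*} [MeasurableSpace Ω] {P : Measure Ω} {f₀ f₁ f₂ f₃ : Ω → ℝ}
    (i0 : Integrable f₀ P) (i1 : Integrable f₁ P) (i2 : Integrable f₂ P)
    (i3 : Integrable f₃ P) :
    ∫ w, (f₀ w + f₁ w + f₂ w + f₃ w) ∂P
      = ∫ w, f₀ w ∂P + ∫ w, f₁ w ∂P + ∫ w, f₂ w ∂P + ∫ w, f₃ w ∂P := by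
  have h1 := integral_add i0 i1
  have h2 := integral_add (i0.add i1) i2
  have h3 := integral_add ((i0.add i1).add i2) i3
  simp only [Pi.add_apply] at h1 h2 h3
  rw [h3, h2, h1]

theorem moment_rec [MeasurableSpace G] [BorelSpace G] (μ : Measure G)
    [μ.IsHaarMeasure] [IsProbabilityMeasure μ] (n : ℕ) :
    ((n : ℝ) + 3) * ∫ g : G, (g.1 0 0).re ^ (n + 1) ∂μ
      = n * ∫ g : G, (g.1 0 0).re ^ (n - 1) ∂μ := by
  have mm := meas_entry
  have m0 : Measurable fun g : G => (g.1 0 0).re := Complex.measurable_re.comp (mm 0 0)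
  have m1 : Measurable fun g : G => (g.1 0 0).im := Complex.measurable_im.comp (mm 0 0)
  have m2 : Measurable fun g : G => (g.1 0 1).re := Complex.measurable_re.comp (mm 0 1)
  have m3 : Measurable fun g : G => (g.1 0 1).im := Complex.measurable_im.comp (mm 0 1)
  have b0 : ∀ g : G, |(g.1 0 0).re| ≤ 1 := fun g => abs_le_one_iff_mul_self_le_one.2 (by
    nlinarith [norm_eq g])
  have b1 : ∀ g : G, |(g.1 0 0).im| ≤ 1 := fun g => abs_le_one_iff_mul_self_le_one.2 (by
    nlinarith [norm_eq g])
  have b2 : ∀ g : G, |(g.1 0 1).re| ≤ 1 := fun g => abs_le_one_iff_mul_self_le_one.2 (by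
    nlinarith [norm_eq g])
  have b3 : ∀ g : G, |(g.1 0 1).im| ≤ 1 := fun g => abs_le_one_iff_mul_self_le_one.2 (by
    nlinarith [norm_eq g])
  have cs : ∀ s : ℝ, (cos s : ℂ) * cos s + (sin s : ℂ) * sin s = 1 := by
    intro s
    have := cos_sq_add_sin_sq s
    rw [sq, sq] at this
    exact_mod_cast this
  have r1 := deriv_moment μ _ _ m0 m1 b0 b1 n (fun s => by
    rw [← integral_mul_left_eq_self (fun g : G => (g.1 0 0).re ^ n * (g.1 0 0).im)
      (mk (cos s + sin s * Complex.I) 0 (by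
        simp only [star_add, star_mul', Complex.star_def, Complex.conj_ofReal, Complex.conj_I,
          star_zero, map_zero]
        linear_combination cs s - (sin s : ℂ) ^ 2 * Complex.I_sq))]
    simp only [mk_mul]
    congr 1; ext g
    simp [-Complex.ofReal_cos, -Complex.ofReal_sin])
  have r2 := deriv_moment μ _ _ m0 m2 b0 b2 n (fun s => by
    rw [← integral_mul_left_eq_self (fun g : G => (g.1 0 0).re ^ n * (g.1 0 1).re)
      (mk (cos s) (sin s) (by
        simp only [Complex.star_def, Complex.conj_ofReal]
        exact cs s))]
    simp only [mk_mul]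
    congr 1; ext g
    simp [-Complex.ofReal_cos, -Complex.ofReal_sin])
  have r3 := deriv_moment μ _ _ m0 m3 b0 b3 n (fun s => by
    rw [← integral_mul_left_eq_self (fun g : G => (g.1 0 0).re ^ n * (g.1 0 1).im)
      (mk (cos s) (sin s * Complex.I) (by
        simp only [star_mul', Complex.star_def, Complex.conj_ofReal, Complex.conj_I]
        linear_combination cs s - (sin s : ℂ) ^ 2 * Complex.I_sq))]
    simp only [mk_mul]
    congr 1; ext g
    simp [-Complex.ofReal_cos, -Complex.ofReal_sin])
  have int : ∀ Y : G → ℝ, Measurable Y → (∀ g, |Y g| ≤ 1) →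
      Integrable (fun g : G => n * (g.1 0 0).re ^ (n - 1) * Y g ^ 2) μ := by
    intro Y hY bY
    refine Integrable.of_bound (by apply Measurable.aestronglyMeasurable; fun_prop)
      (n * 1 ^ (n - 1) * 1 ^ 2) (Filter.Eventually.of_forall fun w => ?_)
    simp only [Real.norm_eq_abs, abs_mul, abs_pow, Nat.abs_cast]
    gcongr
    exacts [b0 w, bY w]
  have e : ∫ g : G, (n : ℝ) * (g.1 0 0).re ^ (n - 1) ∂μ
      = ∫ g : G, n * (g.1 0 0).re ^ (n - 1) * (g.1 0 0).re ^ 2 ∂μ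
      + ∫ g : G, n * (g.1 0 0).re ^ (n - 1) * (g.1 0 0).im ^ 2 ∂μ
      + ∫ g : G, n * (g.1 0 0).re ^ (n - 1) * (g.1 0 1).re ^ 2 ∂μ
      + ∫ g : G, n * (g.1 0 0).re ^ (n - 1) * (g.1 0 1).im ^ 2 ∂μ := by
    have i0 := int _ m0 b0
    have i1 := int _ m1 b1
    have i2 := int _ m2 b2
    have i3 := int _ m3 b3
    refine Eq.trans ?_ (integral_add4 i0 i1 i2 i3)
    congr 1; ext g
    linear_combination (-(n : ℝ) * (g.1 0 0).re ^ (n - 1)) * norm_eq g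
  have e0 : ∫ g : G, n * (g.1 0 0).re ^ (n - 1) * (g.1 0 0).re ^ 2 ∂μ
      = n * ∫ g : G, (g.1 0 0).re ^ (n + 1) ∂μ := by
    rw [← integral_const_mul]
    congr 1; ext g
    rcases n with _ | n
    · simp
    · simp only [Nat.add_sub_cancel]; ring
  rw [← r1, ← r2, ← r3, e0, integral_const_mul] at e
  linarith

theorem law_eq [MeasurableSpace G] [BorelSpace G] (μ : Measure G)
    [μ.IsHaarMeasure] [IsProbabilityMeasure μ] :
    μ.map (fun g : G => (g.1 0 0).re) = sinLaw.map cos := by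
  have m0 : Measurable fun g : G => (g.1 0 0).re := Complex.measurable_re.comp (meas_entry 0 0)
  have : IsProbabilityMeasure (μ.map (fun g : G => (g.1 0 0).re)) :=
    Measure.isProbabilityMeasure_map m0.aemeasurable
  have : IsProbabilityMeasure (sinLaw.map cos) :=
    Measure.isProbabilityMeasure_map measurable_cos.aemeasurable
  apply ext_moments
  · refine (ae_map_iff (p := fun x => x ∈ Set.Icc (-1 : ℝ) 1) m0.aemeasurable
      measurableSet_Icc).2 ?_
    refine Filter.Eventually.of_forall fun g => abs_le.1 (abs_le_one_iff_mul_self_le_one.2 (by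
      nlinarith [norm_eq g]))
  · refine (ae_map_iff (p := fun x => x ∈ Set.Icc (-1 : ℝ) 1) measurable_cos.aemeasurable
      measurableSet_Icc).2 ?_
    exact Filter.Eventually.of_forall fun t => cos_mem_Icc t
  · intro n
    rw [integral_map m0.aemeasurable (by fun_prop), integral_map measurable_cos.aemeasurable
      (by fun_prop)]
    exact moments_unique (fun n => ∫ g : G, (g.1 0 0).re ^ n ∂μ) (fun n => ∫ t, cos t ^ n ∂sinLaw)
      (by simp) (moment_rec μ) sinLaw_rec n

end SU2Angle

open MeasureTheory Real in
/-- Under the normalized Haar measure of `SU(2)`, the random variable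
`θ(g) = arccos(Re(tr g)/2)` has density `t ↦ (2/π) sin² t` on `[0, π]`. -/
theorem haar_SU2_angle_density
    [MeasurableSpace (Matrix.specialUnitaryGroup (Fin 2) ℂ)]
    [BorelSpace (Matrix.specialUnitaryGroup (Fin 2) ℂ)]
    (μ : Measure (Matrix.specialUnitaryGroup (Fin 2) ℂ))
    [μ.IsHaarMeasure] [IsProbabilityMeasure μ] (A : Set ℝ) (hA : MeasurableSet A) :
    μ {g : Matrix.specialUnitaryGroup (Fin 2) ℂ |
        arccos ((Matrix.trace ((g : Matrix (Fin 2) (Fin 2) ℂ))).re / 2) ∈ A} =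
      ENNReal.ofReal (∫ t in A ∩ Set.Icc 0 π, (2 / π) * sin t ^ 2) := by
  have m0 : Measurable fun g : SU2Angle.G => (g.1 0 0).re := Complex.measurable_re.comp
    (SU2Angle.meas_entry 0 0)
  have hB : MeasurableSet (arccos ⁻¹' A) := measurable_arccos hA
  have h1 := congrArg (fun ν : Measure ℝ => ν (arccos ⁻¹' A)) (SU2Angle.law_eq μ)
  rw [Measure.map_apply m0 hB, Measure.map_apply measurable_cos hB] at h1
  rw [← SU2Angle.sinLaw_apply A hA]
  simp only [SU2Angle.trace_eq]
  refine Eq.trans h1 (measure_congr ?_)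
  have hs : ∀ᵐ t ∂SU2Angle.sinLaw, t ∈ Set.Icc 0 π :=
    (withDensity_absolutelyContinuous _ _).ae_le (ae_restrict_mem measurableSet_Icc)
  filter_upwards [hs] with t ht
  have : arccos (cos t) = t := arccos_cos ht.1 ht.2
  change (arccos (cos t) ∈ A) = (t ∈ A)
  rw [this]
end

section
/- Let SO(3) be the group of 3×3 real special orthogonal matrices with normalized Haar probability measure μ. Then the pushforward of μ under the trace map g ↦ tr(g) is absolutely continuous with respect to Lebesgue measure with density y ↦ (1/(2π)) (3−y)^{1/2} (y+1)^{−1/2} on [−1,3]; equivalently, for every Borel set A ⊆ ℝ, μ({g : tr(g) ∈ A}) = ∫_{A ∩ [−1,3]} (1/(2π)) √(3−y)/√(y+1) dy. -/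
/-- `SO(n)` as found in Mathlib is only a submonoid of the matrices; we endow it with its
natural group structure (the inverse being the transpose). -/
noncomputable instance instGroupSO (n : ℕ) : Group (Matrix.specialOrthogonalGroup (Fin n) ℝ) :=
  { (inferInstance : Monoid (Matrix.specialOrthogonalGroup (Fin n) ℝ)) with
    inv := fun g => ⟨star g.1, by
      rw [Matrix.mem_specialUnitaryGroup_iff]
      refine ⟨Unitary.star_mem g.2.1, ?_⟩
      have hdet : (g.1).det = 1 := g.2.2
      simp [Matrix.star_eq_conjTranspose, Matrix.det_conjTranspose, hdet]⟩
    inv_mul_cancel := fun g => by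
      apply Subtype.ext
      exact (Unitary.mem_iff.mp g.2.1).1 }

/-- `SO(n)` is a topological group. -/
instance instTopGroupSO (n : ℕ) : IsTopologicalGroup (Matrix.specialOrthogonalGroup (Fin n) ℝ) where
  continuous_mul := by
    apply Continuous.subtype_mk
    exact (continuous_mul.comp ((continuous_subtype_val.comp continuous_fst).prodMk
      (continuous_subtype_val.comp continuous_snd)))
  continuous_inv := by
    apply Continuous.subtype_mk
    exact continuous_star.comp continuous_subtype_val

namespace SO3Trace



open MeasureTheory Real Set

/-- The group `SO(3)`. -/
abbrev G3 := Matrix.specialOrthogonalGroup (Fin 3) ℝ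

/-- squared norm of a quaternion -/
def nq (q : Fin 4 → ℝ) : ℝ := q 0 ^ 2 + q 1 ^ 2 + q 2 ^ 2 + q 3 ^ 2

/-- The homogeneous Euler-Rodrigues matrix of a quaternion. -/
def P (q : Fin 4 → ℝ) : Matrix (Fin 3) (Fin 3) ℝ :=
  !![q 0 ^ 2 + q 1 ^ 2 - q 2 ^ 2 - q 3 ^ 2, 2 * (q 1 * q 2 - q 0 * q 3), 2 * (q 1 * q 3 + q 0 * q 2);
     2 * (q 1 * q 2 + q 0 * q 3), q 0 ^ 2 - q 1 ^ 2 + q 2 ^ 2 - q 3 ^ 2, 2 * (q 2 * q 3 - q 0 * q 1);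
     2 * (q 1 * q 3 - q 0 * q 2), 2 * (q 2 * q 3 + q 0 * q 1), q 0 ^ 2 - q 1 ^ 2 - q 2 ^ 2 + q 3 ^ 2]

/-- Left multiplication by a quaternion. -/
def Lm (p : Fin 4 → ℝ) : Matrix (Fin 4) (Fin 4) ℝ :=
  !![p 0, -p 1, -p 2, -p 3;
     p 1, p 0, -p 3, p 2;
     p 2, p 3, p 0, -p 1;
     p 3, -p 2, p 1, p 0]

lemma nq_nonneg (q : Fin 4 → ℝ) : 0 ≤ nq q := by unfold nq; positivity

lemma nq_eq_zero {q : Fin 4 → ℝ} (h : nq q = 0) : q = 0 := by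
  unfold nq at h
  have h0 : q 0 ^ 2 = 0 := by nlinarith [sq_nonneg (q 0), sq_nonneg (q 1), sq_nonneg (q 2), sq_nonneg (q 3)]
  have h1 : q 1 ^ 2 = 0 := by nlinarith [sq_nonneg (q 0), sq_nonneg (q 1), sq_nonneg (q 2), sq_nonneg (q 3)]
  have h2 : q 2 ^ 2 = 0 := by nlinarith [sq_nonneg (q 0), sq_nonneg (q 1), sq_nonneg (q 2), sq_nonneg (q 3)]
  have h3 : q 3 ^ 2 = 0 := by nlinarith [sq_nonneg (q 0), sq_nonneg (q 1), sq_nonneg (q 2), sq_nonneg (q 3)]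
  funext i
  fin_cases i <;> simp_all

lemma nq_pos {q : Fin 4 → ℝ} (h : q ≠ 0) : 0 < nq q :=
  lt_of_le_of_ne (nq_nonneg q) (fun h' => h (nq_eq_zero h'.symm))

lemma Lm_mulVec (p q : Fin 4 → ℝ) : (Lm p).mulVec q =
    ![p 0 * q 0 - p 1 * q 1 - p 2 * q 2 - p 3 * q 3,
      p 1 * q 0 + p 0 * q 1 - p 3 * q 2 + p 2 * q 3,
      p 2 * q 0 + p 3 * q 1 + p 0 * q 2 - p 1 * q 3,
      p 3 * q 0 - p 2 * q 1 + p 1 * q 2 + p 0 * q 3] := by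
  funext i
  fin_cases i <;> simp [Lm, Matrix.mulVec, dotProduct, Fin.sum_univ_succ] <;> ring

lemma nq_mul (p q : Fin 4 → ℝ) : nq ((Lm p).mulVec q) = nq p * nq q := by
  rw [Lm_mulVec]; simp [nq]; ring

lemma P_mul (p q : Fin 4 → ℝ) : P ((Lm p).mulVec q) = P p * P q := by
  rw [Lm_mulVec]
  ext i j
  fin_cases i <;> fin_cases j <;> simp [P, Matrix.mul_apply, Fin.sum_univ_succ] <;> ring

lemma P_star (q : Fin 4 → ℝ) : P q * (P q).transpose = (nq q ^ 2) • (1 : Matrix (Fin 3) (Fin 3) ℝ) := by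
  ext i j
  fin_cases i <;> fin_cases j <;>
    simp [P, nq, Matrix.mul_apply, Fin.sum_univ_succ, Matrix.transpose_apply] <;> ring

lemma P_det (q : Fin 4 → ℝ) : (P q).det = nq q ^ 3 := by
  simp [P, nq, Matrix.det_fin_three]; ring

lemma Lm_det (p : Fin 4 → ℝ) : (Lm p).det = nq p ^ 2 := by
  simp [Lm, nq, Matrix.det_succ_row_zero, Fin.sum_univ_succ, Fin.succAbove]; ring

lemma P_trace (q : Fin 4 → ℝ) : (P q).trace = 4 * q 0 ^ 2 - nq q := by
  simp [P, nq, Matrix.trace_fin_three]; ring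

lemma P_mem {q : Fin 4 → ℝ} (h : q ≠ 0) :
    (nq q)⁻¹ • P q ∈ Matrix.specialOrthogonalGroup (Fin 3) ℝ := by
  have hn := (nq_pos h).ne'
  rw [Matrix.mem_specialOrthogonalGroup_iff, Matrix.mem_orthogonalGroup_iff]
  constructor
  · rw [Matrix.transpose_smul, Matrix.smul_mul, Matrix.mul_smul, P_star, smul_smul, smul_smul]
    rw [show (nq q)⁻¹ * (nq q)⁻¹ * nq q ^ 2 = 1 by field_simp, one_smul]
  · rw [Matrix.det_smul, P_det]; simp; field_simp

open Classical in
/-- The rotation associated with a quaternion. -/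
noncomputable def R (q : Fin 4 → ℝ) : G3 := if h : q ≠ 0 then ⟨(nq q)⁻¹ • P q, P_mem h⟩ else 1

lemma R_val {q : Fin 4 → ℝ} (h : q ≠ 0) :
    ((R q : G3) : Matrix (Fin 3) (Fin 3) ℝ) = (nq q)⁻¹ • P q := by
  simp [R, h]

lemma nq_zero : nq 0 = 0 := by simp [nq]

lemma Lm_ne {p q : Fin 4 → ℝ} (hp : p ≠ 0) (hq : q ≠ 0) : (Lm p).mulVec q ≠ 0 := by
  intro h
  have := nq_mul p q
  rw [h, nq_zero] at this
  have := mul_pos (nq_pos hp) (nq_pos hq)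
  linarith

lemma R_mul {p q : Fin 4 → ℝ} (hp : p ≠ 0) (hq : q ≠ 0) : R ((Lm p).mulVec q) = R p * R q := by
  apply Subtype.ext
  change _ = (R p : Matrix (Fin 3) (Fin 3) ℝ) * (R q : Matrix (Fin 3) (Fin 3) ℝ)
  rw [R_val hp, R_val hq, R_val (Lm_ne hp hq), P_mul, nq_mul, Matrix.smul_mul, Matrix.mul_smul,
    smul_smul, mul_inv]

lemma R_trace {q : Fin 4 → ℝ} (h : q ≠ 0) :
    ((R q : G3) : Matrix (Fin 3) (Fin 3) ℝ).trace = 4 * (q 0 ^ 2 / nq q) - 1 := by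
  have hn := (nq_pos h).ne'
  rw [R_val h, Matrix.trace_smul, P_trace]
  simp; field_simp

lemma nq_smul (c : ℝ) (q : Fin 4 → ℝ) : nq (c • q) = c ^ 2 * nq q := by
  simp [nq]; ring

lemma P_smul (c : ℝ) (q : Fin 4 → ℝ) : P (c • q) = c ^ 2 • P q := by
  ext i j
  fin_cases i <;> fin_cases j <;> simp [P] <;> ring

lemma R_smul {c : ℝ} (hc : c ≠ 0) {q : Fin 4 → ℝ} (h : q ≠ 0) : R (c • q) = R q := by
  apply Subtype.ext
  rw [R_val h, R_val (smul_ne_zero hc h), nq_smul, P_smul, smul_smul]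
  congr 1
  field_simp

/-- Surjectivity when the trace is not `-1`. -/
lemma R_surj_aux (g : G3) (hg : 0 < 1 + (g : Matrix (Fin 3) (Fin 3) ℝ).trace) :
    ∃ q, q ≠ 0 ∧ R q = g := by
  obtain ⟨M, hM⟩ := g
  simp only at hg
  obtain ⟨h1, hd⟩ := Matrix.mem_specialOrthogonalGroup_iff.1 hM
  have ho := (Matrix.mem_orthogonalGroup_iff _ _).1 h1
  have ho' := (Matrix.mem_orthogonalGroup_iff' _ _).1 h1
  have hadj : M.adjugate = M.transpose := by
    calc M.adjugate = (M.transpose * M) * M.adjugate := by rw [ho', one_mul]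
      _ = M.transpose := by rw [mul_assoc, Matrix.mul_adjugate, hd, one_smul, mul_one]
  rw [Matrix.trace_fin_three] at hg
  set q : Fin 4 → ℝ := ![1 + (M 0 0 + M 1 1 + M 2 2), M 2 1 - M 1 2, M 0 2 - M 2 0, M 1 0 - M 0 1]
    with hq
  have hq0 : q ≠ 0 := by
    intro h
    have := congrFun h 0
    simp [hq] at this
    linarith
  have e : ∀ i j, (M * M.transpose) i j = (1 : Matrix (Fin 3) (Fin 3) ℝ) i j := fun i j => by rw [ho]
  have e' : ∀ i j, (M.transpose * M) i j = (1 : Matrix (Fin 3) (Fin 3) ℝ) i j := fun i j => by rw [ho']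
  have a : ∀ i j, M.adjugate i j = M.transpose i j := fun i j => by rw [hadj]
  rw [Matrix.adjugate_fin_three] at a
  simp only [Matrix.mul_apply, Fin.sum_univ_three, Matrix.transpose_apply] at e e' a
  have e00 := e 0 0; have e01 := e 0 1; have e02 := e 0 2
  have e11 := e 1 1; have e12 := e 1 2; have e22 := e 2 2
  have f00 := e' 0 0; have f01 := e' 0 1; have f02 := e' 0 2
  have f11 := e' 1 1; have f12 := e' 1 2; have f22 := e' 2 2
  have a00 := a 0 0; have a01 := a 0 1; have a02 := a 0 2
  have a10 := a 1 0; have a11 := a 1 1; have a12 := a 1 2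
  have a20 := a 2 0; have a21 := a 2 1; have a22 := a 2 2
  clear e e' a
  simp at e00 e01 e02 e11 e12 e22 f00 f01 f02 f11 f12 f22 a00 a01 a02 a10 a11 a12 a20 a21 a22
  have s0 : q 0 = 1 + (M 0 0 + M 1 1 + M 2 2) := rfl
  have s1 : q 1 = M 2 1 - M 1 2 := rfl
  have s2 : q 2 = M 0 2 - M 2 0 := rfl
  have s3 : q 3 = M 1 0 - M 0 1 := rfl
  have d1 : q 1 ^ 2 = q 0 * (1 + M 0 0 - M 1 1 - M 2 2) := by
    rw [s0, s1]; linear_combination e11 + e22 - f00 + 2 * a00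
  have d2 : q 2 ^ 2 = q 0 * (1 - M 0 0 + M 1 1 - M 2 2) := by
    rw [s0, s2]; linear_combination e00 + e22 - f11 + 2 * a11
  have d3 : q 3 ^ 2 = q 0 * (1 - M 0 0 - M 1 1 + M 2 2) := by
    rw [s0, s3]; linear_combination e00 + e11 - f22 + 2 * a22
  have d12 : q 1 * q 2 = q 0 * (M 0 1 + M 1 0) := by
    rw [s0, s1, s2]; linear_combination -e01 - f01 + a01 + a10
  have d13 : q 1 * q 3 = q 0 * (M 0 2 + M 2 0) := by
    rw [s0, s1, s3]; linear_combination -e02 - f02 + a02 + a20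
  have d23 : q 2 * q 3 = q 0 * (M 1 2 + M 2 1) := by
    rw [s0, s2, s3]; linear_combination -e12 - f12 + a12 + a21
  have hn : nq q = 4 * q 0 := by
    unfold nq; rw [d1, d2, d3, s0]; ring
  have h0 : q 0 ≠ 0 := by rw [s0]; exact hg.ne'
  refine ⟨q, hq0, Subtype.ext ?_⟩
  rw [R_val hq0, inv_smul_eq_iff₀ (nq_pos hq0).ne', hn]
  ext i j
  fin_cases i <;> fin_cases j <;> simp [P]
  · linear_combination d1 - d2 - d3 + q 0 * s0
  · linear_combination 2 * d12 - 2 * q 0 * s3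
  · linear_combination 2 * d13 + 2 * q 0 * s2
  · linear_combination 2 * d12 + 2 * q 0 * s3
  · linear_combination -d1 + d2 - d3 + q 0 * s0
  · linear_combination 2 * d23 - 2 * q 0 * s1
  · linear_combination 2 * d13 - 2 * q 0 * s2
  · linear_combination 2 * d23 + 2 * q 0 * s1
  · linear_combination -d1 - d2 + d3 + q 0 * s0

lemma quat_inv {p q : Fin 4 → ℝ} (hq : q ≠ 0) (h : R p * R q = 1) (g : G3)
    (hg : ∃ s, s ≠ 0 ∧ R s = g * R p) : ∃ s, s ≠ 0 ∧ R s = g := by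
  obtain ⟨s, hs, hs'⟩ := hg
  refine ⟨(Lm s).mulVec q, Lm_ne hs hq, ?_⟩
  rw [R_mul hs hq, hs', mul_assoc, h, mul_one]

lemma R_surj (g : G3) : ∃ q, q ≠ 0 ∧ R q = g := by
  have hne1 : (![0, 1, 0, 0] : Fin 4 → ℝ) ≠ 0 := fun h => by simpa using congrFun h 1
  have hne2 : (![0, 0, 1, 0] : Fin 4 → ℝ) ≠ 0 := fun h => by simpa using congrFun h 2
  have hne3 : (![0, 0, 0, 1] : Fin 4 → ℝ) ≠ 0 := fun h => by simpa using congrFun h 3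
  have hsq : ∀ p : Fin 4 → ℝ, p ≠ 0 → nq p = 1 → P p * P p = 1 → R p * R p = 1 := by
    intro p hp h1 h2
    apply Subtype.ext
    change (R p : Matrix (Fin 3) (Fin 3) ℝ) * (R p : Matrix (Fin 3) (Fin 3) ℝ) = 1
    rw [R_val hp, h1]; simpa using h2
  have key : ∀ p : Fin 4 → ℝ, p ≠ 0 → nq p = 1 → P p * P p = 1 →
      0 < 1 + ((g : Matrix (Fin 3) (Fin 3) ℝ) * P p).trace → ∃ q, q ≠ 0 ∧ R q = g := by
    intro p hp h1 h2 h3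
    refine quat_inv hp (hsq p hp h1 h2) g (R_surj_aux _ ?_)
    change 0 < 1 + ((g : Matrix (Fin 3) (Fin 3) ℝ) * (R p : Matrix (Fin 3) (Fin 3) ℝ)).trace
    rw [R_val hp, h1]; simpa using h3
  set M := (g : Matrix (Fin 3) (Fin 3) ℝ) with hM
  by_cases c0 : 0 < 1 + M.trace
  · exact R_surj_aux g c0
  by_cases c1 : 0 < 1 + (M * P ![0, 1, 0, 0]).trace
  · refine key _ hne1 (by simp [nq]) ?_ c1
    ext i j; fin_cases i <;> fin_cases j <;> simp [P, Matrix.mul_apply, Fin.sum_univ_three]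
  by_cases c2 : 0 < 1 + (M * P ![0, 0, 1, 0]).trace
  · refine key _ hne2 (by simp [nq]) ?_ c2
    ext i j; fin_cases i <;> fin_cases j <;> simp [P, Matrix.mul_apply, Fin.sum_univ_three]
  refine key _ hne3 (by simp [nq]) ?_ ?_
  · ext i j; fin_cases i <;> fin_cases j <;> simp [P, Matrix.mul_apply, Fin.sum_univ_three]
  · simp [P, Matrix.trace_fin_three, Matrix.mul_apply, Fin.sum_univ_three] at c0 c1 c2 ⊢
    linarith

lemma R_surj_unit (g : G3) : ∃ q, nq q = 1 ∧ R q = g := by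
  obtain ⟨q, hq, h⟩ := R_surj g
  have hn := nq_pos hq
  refine ⟨(√(nq q))⁻¹ • q, ?_, ?_⟩
  · rw [nq_smul, inv_pow, Real.sq_sqrt hn.le, inv_mul_cancel₀ hn.ne']
  · rw [R_smul (by positivity) hq, h]

instance compactG3 : CompactSpace G3 := by
  apply isCompact_iff_compactSpace.1
  have hsub : (Matrix.specialOrthogonalGroup (Fin 3) ℝ : Set (Matrix (Fin 3) (Fin 3) ℝ)) ⊆
      Set.pi univ (fun _ => Set.pi univ (fun _ => Icc (-1 : ℝ) 1)) := by
    intro U hU i _ j _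
    have := entry_norm_bound_of_unitary hU.1 i j
    exact abs_le.1 this
  refine IsCompact.of_isClosed_subset (isCompact_univ_pi fun _ => isCompact_univ_pi fun _ =>
    isCompact_Icc) ?_ hsub
  have : (Matrix.specialOrthogonalGroup (Fin 3) ℝ : Set (Matrix (Fin 3) (Fin 3) ℝ)) =
      {A | A * A.transpose = 1} ∩ {A | A.det = 1} := by
    ext A
    simp only [SetLike.mem_coe, Matrix.mem_specialOrthogonalGroup_iff,
      Matrix.mem_orthogonalGroup_iff]
    rfl
  rw [this]
  exact (isClosed_eq (by fun_prop) continuous_const).inter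
    (isClosed_eq (by fun_prop) continuous_const)

lemma continuous_nq : Continuous nq := by unfold nq; fun_prop

lemma continuous_P : Continuous P := by
  refine continuous_matrix fun i j => ?_
  fin_cases i <;> fin_cases j <;> simp [P] <;> fun_prop

lemma measurable_R [MeasurableSpace G3] [BorelSpace G3] : Measurable R := by
  refine measurable_of_continuousOn_compl_singleton 0 ?_
  rw [continuousOn_iff_continuous_domRestrict, Topology.IsInducing.subtypeVal.continuous_iff]
  have : (Subtype.val ∘ Set.domRestrict ({0}ᶜ : Set (Fin 4 → ℝ)) R) =
      fun q : ({0}ᶜ : Set (Fin 4 → ℝ)) => (nq q)⁻¹ • P q := by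
    funext q
    exact R_val q.2
  refine Continuous.congr ?_ (fun q => (congrFun this q).symm)
  refine Continuous.smul (Continuous.inv₀ (continuous_nq.comp continuous_subtype_val) ?_)
    (continuous_P.comp continuous_subtype_val)
  exact fun q => (nq_pos q.2).ne'

/-- Lebesgue measure on the unit ball of quaternions. -/
noncomputable def ball4 : Measure (Fin 4 → ℝ) := volume.restrict {q | nq q < 1}

lemma isOpen_ball4 : IsOpen {q : Fin 4 → ℝ | nq q < 1} := isOpen_lt continuous_nq continuous_const

instance finite_ball4 : IsFiniteMeasure ball4 := by
  constructor
  rw [ball4, Measure.restrict_apply_univ]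
  refine lt_of_le_of_lt (measure_mono (t := Icc (fun _ => -1) (fun _ => 1)) ?_)
    isCompact_Icc.measure_lt_top
  intro q hq
  simp only [mem_ofPred_eq, nq] at hq
  have : ∀ i, |q i| ≤ 1 := by
    intro i
    rw [← sq_le_one_iff_abs_le_one]
    fin_cases i <;> simp only [Fin.zero_eta, Fin.mk_one, Fin.reduceFinMk] <;>
      nlinarith [sq_nonneg (q 0), sq_nonneg (q 1), sq_nonneg (q 2), sq_nonneg (q 3)]
  exact ⟨fun i => (abs_le.1 (this i)).1, fun i => (abs_le.1 (this i)).2⟩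

lemma ball4_ne_zero : ball4 univ ≠ 0 := by
  rw [ball4, Measure.restrict_apply_univ]
  exact (isOpen_ball4.measure_pos volume ⟨0, by simp [nq_zero]⟩).ne'

lemma map_ball4 {p : Fin 4 → ℝ} (hp : nq p = 1) :
    ball4.map (fun q => (Lm p).mulVec q) = ball4 := by
  have hdet : (Lm p).det = 1 := by rw [Lm_det, hp]; norm_num
  have h := Real.map_matrix_volume_pi_eq_smul_volume_pi (M := Lm p) (by rw [hdet]; norm_num)
  rw [hdet] at h
  simp only [inv_one, abs_one, ENNReal.ofReal_one, one_smul] at h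
  have hm : Measurable (fun q => (Lm p).mulVec q) := by
    have : Continuous (fun q => (Lm p).mulVec q) := by fun_prop
    exact this.measurable
  change volume.map (fun q => (Lm p).mulVec q) = volume at h
  have hpre : (fun q => (Lm p).mulVec q) ⁻¹' {q | nq q < 1} = {q | nq q < 1} := by
    ext q; simp [nq_mul, hp]
  conv_rhs => rw [ball4, ← h, Measure.restrict_map hm isOpen_ball4.measurableSet, hpre]
  rfl

lemma ball4_ae : ∀ᵐ q ∂ball4, q ≠ 0 := by
  have : ∀ᵐ q ∂(volume : Measure (Fin 4 → ℝ)), q ≠ 0 := Measure.ae_ne volume 0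
  exact ae_restrict_of_ae this

lemma haar_eq [MeasurableSpace G3] [BorelSpace G3] (μ : Measure G3) [μ.IsHaarMeasure]
    [IsProbabilityMeasure μ] (s : Set G3) (hs : MeasurableSet s) :
    ball4 (R ⁻¹' s) = ball4 univ * μ s := by
  have hinv : (ball4.map R).IsMulLeftInvariant := by
    constructor
    intro g
    obtain ⟨p, hp, rfl⟩ := R_surj_unit g
    have hp0 : p ≠ 0 := by rintro rfl; rw [nq_zero] at hp; norm_num at hp
    have hm : Measurable (fun q => (Lm p).mulVec q) := by
      have : Continuous (fun q => (Lm p).mulVec q) := by fun_prop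
      exact this.measurable
    rw [Measure.map_map (measurable_const_mul _) measurable_R]
    conv_rhs => rw [← map_ball4 hp, Measure.map_map measurable_R hm]
    refine Measure.map_congr ?_
    filter_upwards [ball4_ae] with q hq
    exact (R_mul hp0 hq).symm
  have h := Measure.isMulInvariant_eq_smul_of_compactSpace (ball4.map R) μ
  obtain ⟨c, hc⟩ : ∃ c : NNReal, ball4.map R = c • μ := ⟨_, h⟩
  have h2 : ∀ t, MeasurableSet t → ball4 (R ⁻¹' t) = (c : ENNReal) * μ t := by
    intro t ht
    rw [← Measure.map_apply measurable_R ht, hc]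
    rfl
  have h3 := h2 univ MeasurableSet.univ
  rw [preimage_univ, measure_univ (μ := μ), mul_one] at h3
  rw [h2 s hs, h3]

lemma lintegral_radial {E : Type*} [NormedAddCommGroup E] [NormedSpace ℝ E] [MeasurableSpace E]
    [BorelSpace E] [FiniteDimensional ℝ E] [Nontrivial E] (μ : Measure E) [μ.IsAddHaarMeasure]
    (f : ℝ → ENNReal) (hf : Measurable f) :
    ∫⁻ x, f ‖x‖ ∂μ = μ.toSphere univ *
      ∫⁻ r in Ioi (0 : ℝ), ENNReal.ofReal (r ^ (Module.finrank ℝ E - 1)) * f r :=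
  calc
    ∫⁻ x, f ‖x‖ ∂μ = ∫⁻ x : ({(0)}ᶜ : Set E), f (‖x.1‖) ∂(μ.comap (↑)) := by
      rw [lintegral_subtype_comap (measurableSet_singleton _).compl fun x ↦ f (‖x‖),
        restrict_compl_singleton]
    _ = ∫⁻ x, f x.2 ∂μ.toSphere.prod (.volumeIoiPow (Module.finrank ℝ E - 1)) := by
      simpa using μ.measurePreserving_homeomorphUnitSphereProd.lintegral_comp_emb
        (Homeomorph.measurableEmbedding _) (f ∘ Subtype.val ∘ Prod.snd)
    _ = μ.toSphere univ * ∫⁻ x : Ioi (0 : ℝ), f x ∂.volumeIoiPow (Module.finrank ℝ E - 1) := by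
      have h := lintegral_prod_mul (μ := μ.toSphere)
        (ν := Measure.volumeIoiPow (Module.finrank ℝ E - 1)) (f := fun _ => 1)
        (g := fun x : Ioi (0 : ℝ) => f x) aemeasurable_const
        (hf.comp measurable_subtype_coe).aemeasurable
      simpa using h
    _ = _ := by
      have hm : Measurable fun r : Ioi (0 : ℝ) =>
          ENNReal.ofReal ((r : ℝ) ^ (Module.finrank ℝ E - 1)) :=
        (measurable_subtype_coe.pow_const _).ennreal_ofReal
      rw [Measure.volumeIoiPow, lintegral_withDensity_eq_lintegral_mul _ hm
        (g := fun r : Ioi (0 : ℝ) => f r) (hf.comp measurable_subtype_coe)]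
      congr 1
      exact lintegral_subtype_comap measurableSet_Ioi
        fun r : ℝ => ENNReal.ofReal (r ^ (Module.finrank ℝ E - 1)) * f r

/-- The sector condition in the half-plane coordinates. -/
def SA (A : Set ℝ) : Set (ℝ × ℝ) :=
  {p | p.1 ^ 2 + p.2 ^ 2 < 1 ∧ 4 * (p.1 ^ 2 / (p.1 ^ 2 + p.2 ^ 2)) - 1 ∈ A}

lemma measurableSet_SA {A : Set ℝ} (hA : MeasurableSet A) : MeasurableSet (SA A) := by
  refine MeasurableSet.inter (s₁ := {p : ℝ × ℝ | p.1 ^ 2 + p.2 ^ 2 < 1})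
    (s₂ := {p : ℝ × ℝ | 4 * (p.1 ^ 2 / (p.1 ^ 2 + p.2 ^ 2)) - 1 ∈ A}) ?_ ?_
  · exact measurableSet_lt (by fun_prop) (by fun_prop)
  · have : Measurable fun p : ℝ × ℝ => 4 * (p.1 ^ 2 / (p.1 ^ 2 + p.2 ^ 2)) - 1 := by fun_prop
    exact this hA

lemma ball4_eq_prod {A : Set ℝ} (hA : MeasurableSet A) :
    ball4 {q | 4 * (q 0 ^ 2 / nq q) - 1 ∈ A} =
      ∫⁻ a : ℝ, ∫⁻ v : EuclideanSpace ℝ (Fin 3), (SA A).indicator 1 (a, ‖v‖) := by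
  have hS := measurableSet_SA hA
  have hmF : Measurable ((SA A).indicator (1 : ℝ × ℝ → ENNReal)) := measurable_one.indicator hS
  have hnq : Measurable nq := continuous_nq.measurable
  have hset : MeasurableSet {q : Fin 4 → ℝ | 4 * (q 0 ^ 2 / nq q) - 1 ∈ A} := by
    have : Measurable fun q : Fin 4 → ℝ => 4 * (q 0 ^ 2 / nq q) - 1 := by fun_prop
    exact this hA
  rw [ball4, Measure.restrict_apply hset, ← lintegral_indicator_one
    (hset.inter isOpen_ball4.measurableSet)]
  have e1 := volume_preserving_piFinSuccAbove (fun _ : Fin 4 => ℝ) 0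
  have e2 := (MeasurePreserving.id (volume : Measure ℝ)).prod (PiLp.volume_preserving_toLp (Fin 3))
  have e3 := e2.comp e1
  have hn : ∀ q : Fin 4 → ℝ,
      ‖(WithLp.toLp 2 (fun i : Fin 3 => q i.succ) : EuclideanSpace ℝ (Fin 3))‖ ^ 2 =
      q 1 ^ 2 + q 2 ^ 2 + q 3 ^ 2 := by
    intro q
    rw [EuclideanSpace.norm_sq_eq, Fin.sum_univ_three]
    simp
  have hm : Measurable (fun p : ℝ × EuclideanSpace ℝ (Fin 3) =>
      (SA A).indicator (1 : ℝ × ℝ → ENNReal) (p.1, ‖p.2‖)) :=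
    hmF.comp (measurable_fst.prodMk measurable_snd.norm)
  rw [← lintegral_prod (fun p : ℝ × EuclideanSpace ℝ (Fin 3) =>
      (SA A).indicator (1 : ℝ × ℝ → ENNReal) (p.1, ‖p.2‖)) hm.aemeasurable]
  rw [← e3.lintegral_comp hm]
  refine lintegral_congr fun q => ?_
  have hq : (Prod.map id (WithLp.toLp 2) ∘ (MeasurableEquiv.piFinSuccAbove (fun _ : Fin 4 => ℝ) 0)) q
      = (q 0, (WithLp.toLp 2 (fun i : Fin 3 => q i.succ) : EuclideanSpace ℝ (Fin 3))) := rfl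
  rw [hq]
  refine Set.indicator_eq_indicator ?_ rfl
  simp only [SA, mem_inter_iff, mem_ofPred_eq, hn, nq, ← add_assoc]
  exact and_comm

/-- angular weight -/
noncomputable def ang (A : Set ℝ) : ENNReal :=
  ∫⁻ θ in Ioo 0 π, ENNReal.ofReal (sin θ ^ 2) * A.indicator 1 (4 * cos θ ^ 2 - 1)

lemma polar_calc {A : Set ℝ} (hA : MeasurableSet A) :
    ∫⁻ a : ℝ, ∫⁻ r in Ioi (0 : ℝ), ENNReal.ofReal (r ^ 2) * (SA A).indicator 1 (a, r) =
      (∫⁻ r in Ioi (0 : ℝ), ENNReal.ofReal (r ^ 3) * (Iio 1).indicator 1 r) * ang A := by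
  have hS := measurableSet_SA hA
  have hmF : Measurable ((SA A).indicator (1 : ℝ × ℝ → ENNReal)) := measurable_one.indicator hS
  set H : ℝ × ℝ → ENNReal := fun p => (Ioi (0 : ℝ)).indicator 1 p.2 *
    (ENNReal.ofReal (p.2 ^ 2) * (SA A).indicator 1 p) with hH
  have hI : Measurable ((Ioi (0 : ℝ)).indicator (1 : ℝ → ENNReal)) :=
    measurable_one.indicator measurableSet_Ioi
  have hHm : Measurable H := by
    refine (hI.comp measurable_snd).mul (Measurable.mul ?_ hmF)
    fun_prop
  have h1 : ∫⁻ a : ℝ, ∫⁻ r in Ioi (0 : ℝ), ENNReal.ofReal (r ^ 2) * (SA A).indicator 1 (a, r) =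
      ∫⁻ p : ℝ × ℝ, H p := by
    rw [Measure.volume_eq_prod, lintegral_prod _ hHm.aemeasurable]
    refine lintegral_congr fun a => ?_
    rw [← lintegral_indicator measurableSet_Ioi]
    refine lintegral_congr fun r => ?_
    by_cases hr : r ∈ Ioi (0 : ℝ) <;> simp only [hH, hr, indicator_of_mem, indicator_of_notMem,
      not_false_eq_true, Pi.one_apply, one_mul, zero_mul]
  rw [h1, ← lintegral_comp_polarCoord_symm, polarCoord_target, Measure.volume_eq_prod,
    ← Measure.prod_restrict]
  have hang : ang A = ∫⁻ θ in Ioo (-π) π, (Ioi (0 : ℝ)).indicator 1 (sin θ) *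
      (ENNReal.ofReal (sin θ ^ 2) * A.indicator 1 (4 * cos θ ^ 2 - 1)) := by
    rw [ang, ← lintegral_indicator measurableSet_Ioo, ← lintegral_indicator measurableSet_Ioo]
    refine lintegral_congr fun θ => ?_
    by_cases h : θ ∈ Ioo 0 π
    · have h' : θ ∈ Ioo (-π) π := ⟨by linarith [h.1, pi_pos], h.2⟩
      have hs : sin θ ∈ Ioi (0 : ℝ) := sin_pos_of_mem_Ioo h
      simp only [h, h', hs, indicator_of_mem, Pi.one_apply, one_mul]
    · by_cases h' : θ ∈ Ioo (-π) π
      · have hs : sin θ ∉ Ioi (0 : ℝ) := by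
          have : θ ≤ 0 := by
            by_contra hc
            exact h ⟨not_le.1 hc, h'.2⟩
          exact not_lt.2 (sin_nonpos_of_nonpos_of_neg_pi_le this h'.1.le)
        simp only [h, h', hs, indicator_of_mem, indicator_of_notMem, not_false_eq_true, zero_mul]
      · simp only [h, h', indicator_of_notMem, not_false_eq_true]
  have hIA : Measurable (A.indicator (1 : ℝ → ENNReal)) := measurable_one.indicator hA
  have hI1 : Measurable ((Iio (1 : ℝ)).indicator (1 : ℝ → ENNReal)) :=
    measurable_one.indicator measurableSet_Iio
  rw [hang, ← lintegral_prod_mul]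
  · rw [Measure.prod_restrict]
    refine setLIntegral_congr_fun (measurableSet_Ioi.prod measurableSet_Ioo) fun p hp => ?_
    obtain ⟨hr, hθ⟩ := hp
    have hr : 0 < p.1 := hr
    simp only [polarCoord_symm_apply, hH, smul_eq_mul]
    have hs : (Ioi (0 : ℝ)).indicator (1 : ℝ → ENNReal) (p.1 * sin p.2) =
        (Ioi (0 : ℝ)).indicator 1 (sin p.2) := by
      refine Set.indicator_eq_indicator ?_ rfl
      simp [hr]
    have hcs : (p.1 * cos p.2) ^ 2 + (p.1 * sin p.2) ^ 2 = p.1 ^ 2 := by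
      linear_combination p.1 ^ 2 * sin_sq_add_cos_sq p.2
    have hSA : (SA A).indicator (1 : ℝ × ℝ → ENNReal) (p.1 * cos p.2, p.1 * sin p.2) =
        (Iio 1).indicator 1 p.1 * A.indicator 1 (4 * cos p.2 ^ 2 - 1) := by
      have hiff : (p.1 * cos p.2, p.1 * sin p.2) ∈ SA A ↔ p.1 ∈ Iio (1 : ℝ) ∧
          4 * cos p.2 ^ 2 - 1 ∈ A := by
        simp only [SA, mem_ofPred_eq, hcs, mem_Iio]
        rw [mul_pow, mul_div_cancel_left₀ _ (by positivity), sq_lt_one_iff₀ hr.le]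
      by_cases h1 : p.1 ∈ Iio (1 : ℝ) <;> by_cases h2 : 4 * cos p.2 ^ 2 - 1 ∈ A <;>
        simp only [indicator, hiff, h1, h2, and_self, and_true, and_false, if_true, if_false,
          Pi.one_apply, mul_one, mul_zero]
    rw [hs, hSA, show p.1 ^ 3 = p.1 * p.1 ^ 2 by ring, ENNReal.ofReal_mul hr.le, mul_pow,
      ENNReal.ofReal_mul (by positivity)]
    ring
  · exact (Measurable.mul (by fun_prop) hI1).aemeasurable
  · refine Measurable.aemeasurable ?_
    refine (hI.comp measurable_sin).mul (Measurable.mul (by fun_prop) (hIA.comp (by fun_prop)))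

/-- Unnormalised density. -/
noncomputable def dens (y : ℝ) : ℝ := √(3 - y) / √(y + 1)

lemma change_var {A : Set ℝ} {s : Set ℝ} (hs : MeasurableSet s)
    (hinj : InjOn (fun θ => 4 * cos θ ^ 2 - 1) s)
    (him : (fun θ => 4 * cos θ ^ 2 - 1) '' s = Ioo (-1 : ℝ) 3)
    (hc : ∀ θ ∈ s, cos θ ≠ 0) :
    ∫⁻ y in Ioo (-1 : ℝ) 3, A.indicator 1 y * ENNReal.ofReal (dens y) =
      8 * ∫⁻ θ in s, ENNReal.ofReal (sin θ ^ 2) * A.indicator 1 (4 * cos θ ^ 2 - 1) := by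
  have hd : ∀ θ ∈ s, HasDerivWithinAt (fun θ => 4 * cos θ ^ 2 - 1) (-8 * cos θ * sin θ) s θ := by
    intro θ _
    have h := (((hasDerivAt_cos θ).pow 2).const_mul 4).sub_const 1
    refine HasDerivAt.hasDerivWithinAt ?_
    have e : -8 * cos θ * sin θ = 4 * (((2 : ℕ) : ℝ) * cos θ ^ (2 - 1) * -sin θ) := by
      norm_num
      ring
    rw [e]
    exact h
  rw [← him, lintegral_image_eq_lintegral_abs_deriv_mul hs hd hinj,
    ← lintegral_const_mul' _ _ (by norm_num)]
  refine setLIntegral_congr_fun hs fun θ hθ => ?_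
  have h1 : 3 - (4 * cos θ ^ 2 - 1) = (2 * sin θ) ^ 2 := by
    linear_combination -4 * sin_sq_add_cos_sq θ
  have h2 : 4 * cos θ ^ 2 - 1 + 1 = (2 * cos θ) ^ 2 := by ring
  have h3 : |-8 * cos θ * sin θ| * dens (4 * cos θ ^ 2 - 1) = 8 * sin θ ^ 2 := by
    have := abs_pos.2 (hc θ hθ)
    rw [dens, h1, h2, sqrt_sq_eq_abs, sqrt_sq_eq_abs]
    simp only [abs_mul, abs_neg, Nat.abs_ofNat]
    rw [← sq_abs (sin θ)]
    field_simp
  calc _ = ENNReal.ofReal (|-8 * cos θ * sin θ| * dens (4 * cos θ ^ 2 - 1)) *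
        A.indicator 1 (4 * cos θ ^ 2 - 1) := by
        rw [ENNReal.ofReal_mul (abs_nonneg _)]; ring
    _ = _ := by
        rw [h3, ENNReal.ofReal_mul (by norm_num), ENNReal.ofReal_ofNat, mul_assoc]

lemma ang_eq (A : Set ℝ) :
    8 * ang A = 2 * ∫⁻ y in Ioo (-1 : ℝ) 3, A.indicator 1 y * ENNReal.ofReal (dens y) := by
  have hinj : ∀ x ∈ Icc 0 π, ∀ y ∈ Icc 0 π, 0 < cos x * cos y →
      4 * cos x ^ 2 - 1 = 4 * cos y ^ 2 - 1 → x = y := by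
    intro x hx y hy hp h
    refine injOn_cos hx hy ?_
    have : (cos x - cos y) * (cos x + cos y) = 0 := by linear_combination h / 4
    rcases mul_eq_zero.1 this with h' | h'
    · linarith
    · exfalso
      have : cos x = - cos y := by linarith
      rw [this] at hp
      nlinarith [sq_nonneg (cos y)]
  have hA1 := change_var (A := A) (s := Ioo 0 (π / 2)) measurableSet_Ioo ?_ ?_ ?_
  have hA2 := change_var (A := A) (s := Ioo (π / 2) π) measurableSet_Ioo ?_ ?_ ?_
  · have hsplit : ang A =
        (∫⁻ θ in Ioo 0 (π / 2), ENNReal.ofReal (sin θ ^ 2) * A.indicator 1 (4 * cos θ ^ 2 - 1)) +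
        ∫⁻ θ in Ioo (π / 2) π, ENNReal.ofReal (sin θ ^ 2) * A.indicator 1 (4 * cos θ ^ 2 - 1) := by
      have hu : Ioo 0 π = Ioc 0 (π / 2) ∪ Ioo (π / 2) π :=
        (Ioc_union_Ioo_eq_Ioo (by positivity) (by linarith [pi_pos])).symm
      rw [ang, hu, lintegral_union measurableSet_Ioo]
      · congr 1
        exact setLIntegral_congr Ioo_ae_eq_Ioc.symm
      · rw [Set.disjoint_left]
        exact fun x hx hx' => absurd hx.2 (not_le.2 hx'.1)
    rw [hsplit, mul_add, ← hA1, ← hA2, two_mul]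
  · intro x hx y hy h
    exact hinj x ⟨by linarith [hx.1, pi_pos], hx.2.le⟩ y ⟨by linarith [hy.1, pi_pos], hy.2.le⟩
      (mul_pos_of_neg_of_neg (cos_neg_of_pi_div_two_lt_of_lt hx.1 (by linarith [hx.2, pi_pos]))
      (cos_neg_of_pi_div_two_lt_of_lt hy.1 (by linarith [hy.2, pi_pos]))) h
  · ext y
    constructor
    · rintro ⟨θ, hθ, rfl⟩
      have h1 := cos_neg_of_pi_div_two_lt_of_lt hθ.1 (by linarith [hθ.2, pi_pos])
      have h2 := sin_pos_of_pos_of_lt_pi (by linarith [hθ.1, pi_pos]) hθ.2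
      have h3 := sin_sq_add_cos_sq θ
      constructor <;> simp only <;> nlinarith [sq_pos_of_neg h1, sq_pos_of_pos h2]
    · intro hy
      have hp : 0 < (y + 1) / 4 := by linarith [hy.1]
      have hlt : √((y + 1) / 4) < 1 := by
        rw [sqrt_lt' one_pos]; linarith [hy.2]
      have h0 := sqrt_pos.2 hp
      refine ⟨arccos (-√((y + 1) / 4)), ⟨?_, ?_⟩, ?_⟩
      · rw [← not_le, arccos_le_pi_div_two]; linarith
      · refine lt_of_le_of_ne (arccos_le_pi _) ?_
        rw [Ne, arccos_eq_pi]; linarith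
      · simp only
        rw [cos_arccos (by linarith) (by linarith), neg_sq, sq_sqrt hp.le]; ring
  · intro θ hθ
    exact (cos_neg_of_pi_div_two_lt_of_lt hθ.1 (by linarith [hθ.2, pi_pos])).ne
  · intro x hx y hy h
    exact hinj x ⟨hx.1.le, by linarith [hx.2, pi_pos]⟩ y ⟨hy.1.le, by linarith [hy.2, pi_pos]⟩
      (mul_pos (cos_pos_of_mem_Ioo ⟨by linarith [hx.1, pi_pos], hx.2⟩)
      (cos_pos_of_mem_Ioo ⟨by linarith [hy.1, pi_pos], hy.2⟩)) h
  · ext y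
    constructor
    · rintro ⟨θ, hθ, rfl⟩
      have h1 := cos_pos_of_mem_Ioo ⟨by linarith [hθ.1, pi_pos], hθ.2⟩
      have h2 := sin_pos_of_pos_of_lt_pi hθ.1 (by linarith [hθ.2, pi_pos])
      have h3 := sin_sq_add_cos_sq θ
      constructor <;> simp only <;> nlinarith [sq_pos_of_pos h1, sq_pos_of_pos h2]
    · intro hy
      have hp : 0 < (y + 1) / 4 := by linarith [hy.1]
      have hlt : √((y + 1) / 4) < 1 := by
        rw [sqrt_lt' one_pos]; linarith [hy.2]
      have h0 := sqrt_pos.2 hp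
      refine ⟨arccos (√((y + 1) / 4)), ⟨?_, ?_⟩, ?_⟩
      · rw [arccos_pos]; exact hlt
      · rw [arccos_lt_pi_div_two]; exact h0
      · simp only
        rw [cos_arccos (by linarith) (by linarith), sq_sqrt hp.le]; ring
  · intro θ hθ
    exact (cos_pos_of_mem_Ioo ⟨by linarith [hθ.1, pi_pos], hθ.2⟩).ne'

lemma ang_univ : ang univ = ENNReal.ofReal (π / 2) := by
  simp only [ang, indicator_univ, Pi.one_apply, mul_one]
  have hc : Continuous fun θ : ℝ => sin θ ^ 2 := by fun_prop
  rw [← ofReal_integral_eq_lintegral_ofReal]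
  · rw [← integral_Ioc_eq_integral_Ioo, ← intervalIntegral.integral_of_le pi_pos.le,
      integral_sin_sq]
    simp
  · exact (hc.integrableOn_Icc (a := 0) (b := π)).mono_set Ioo_subset_Icc_self
  · exact Filter.Eventually.of_forall fun θ => sq_nonneg _

lemma ball4_ang : ∃ K : ENNReal, ∀ A : Set ℝ, MeasurableSet A →
    ball4 {q | 4 * (q 0 ^ 2 / nq q) - 1 ∈ A} = K * ang A := by
  refine ⟨(volume : Measure (EuclideanSpace ℝ (Fin 3))).toSphere univ *
    (∫⁻ r in Ioi (0 : ℝ), ENNReal.ofReal (r ^ 3) * (Iio 1).indicator 1 r), fun A hA => ?_⟩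
  have hmF : Measurable ((SA A).indicator (1 : ℝ × ℝ → ENNReal)) :=
    measurable_one.indicator (measurableSet_SA hA)
  rw [ball4_eq_prod hA, mul_assoc, ← polar_calc hA, ← lintegral_const_mul' _ _ (measure_ne_top _ _)]
  refine lintegral_congr fun a => ?_
  have := lintegral_radial (volume : Measure (EuclideanSpace ℝ (Fin 3)))
    (fun r => (SA A).indicator 1 (a, r)) (hmF.comp measurable_prodMk_left)
  rw [this]
  simp

lemma main_aux [MeasurableSpace G3] [BorelSpace G3] (μ : Measure G3) [μ.IsHaarMeasure]
    [IsProbabilityMeasure μ] {A : Set ℝ} (hA : MeasurableSet A) :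
    μ {g : G3 | ((g : Matrix (Fin 3) (Fin 3) ℝ)).trace ∈ A} * ang univ = ang A := by
  obtain ⟨K, hK⟩ := ball4_ang
  have hm : Measurable fun g : G3 => ((g : Matrix (Fin 3) (Fin 3) ℝ)).trace := by
    have : Continuous fun g : G3 => ((g : Matrix (Fin 3) (Fin 3) ℝ)).trace :=
      continuous_subtype_val.matrix_trace
    exact this.measurable
  have h1 := haar_eq μ _ (hm hA)
  have h2 : ball4 (R ⁻¹' ((fun g : G3 => ((g : Matrix (Fin 3) (Fin 3) ℝ)).trace) ⁻¹' A)) =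
      K * ang A := by
    rw [← hK A hA]
    refine measure_congr ?_
    filter_upwards [ball4_ae] with q hq
    refine propext ?_
    change (R q : Matrix (Fin 3) (Fin 3) ℝ).trace ∈ A ↔ 4 * (q 0 ^ 2 / nq q) - 1 ∈ A
    rw [R_trace hq]
  have h3 : ball4 univ = K * ang univ := by
    rw [← hK univ MeasurableSet.univ]; simp
  have hne := ball4_ne_zero
  have hfin : ball4 univ ≠ ⊤ := measure_ne_top _ _
  have hK0 : K ≠ 0 := by rintro rfl; simp [h3] at hne
  have hKt : K ≠ ⊤ := by
    rintro rfl
    rw [h3, ang_univ, ENNReal.top_mul (by simp [pi_pos])] at hfin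
    exact hfin rfl
  rw [h2, h3, mul_assoc] at h1
  have := (ENNReal.mul_right_inj hK0 hKt).1 h1
  rw [this, mul_comm]
  rfl

theorem main [MeasurableSpace G3] [BorelSpace G3] (μ : Measure G3) [μ.IsHaarMeasure]
    [IsProbabilityMeasure μ] {A : Set ℝ} (hA : MeasurableSet A) :
    μ {g : G3 | ((g : Matrix (Fin 3) (Fin 3) ℝ)).trace ∈ A} =
    ENNReal.ofReal
        (∫ y in A ∩ Set.Icc (-1 : ℝ) 3, (1 / (2 * π)) * Real.sqrt (3 - y) / Real.sqrt (y + 1)) := by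
  have h := main_aux μ hA
  have hmd : Measurable dens := by unfold dens; fun_prop
  have hd0 : ∀ y, 0 ≤ dens y := fun y => by unfold dens; positivity
  have hAI : ∫⁻ y in Ioo (-1 : ℝ) 3, A.indicator 1 y * ENNReal.ofReal (dens y) =
      ∫⁻ y in A ∩ Icc (-1 : ℝ) 3, ENNReal.ofReal (dens y) := by
    rw [setLIntegral_congr Ioo_ae_eq_Icc, ← Measure.restrict_restrict hA, ← lintegral_indicator hA]
    refine lintegral_congr fun y => ?_
    by_cases hy : y ∈ A <;> simp [hy]
  have h8 := ang_eq A
  rw [← h, ang_univ, hAI] at h8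
  have hle : μ {g : G3 | ((g : Matrix (Fin 3) (Fin 3) ℝ)).trace ∈ A} ≠ ⊤ := measure_ne_top _ _
  set m := μ {g : G3 | ((g : Matrix (Fin 3) (Fin 3) ℝ)).trace ∈ A} with hm
  have e1 : ∀ y : ℝ, (1 / (2 * π)) * √(3 - y) / √(y + 1) = (1 / (2 * π)) * dens y := by
    intro y; rw [dens, mul_div_assoc]
  simp only [e1]
  rw [integral_const_mul, integral_eq_lintegral_of_nonneg_ae (Filter.Eventually.of_forall hd0)
    hmd.aestronglyMeasurable]
  set I := ∫⁻ y in A ∩ Icc (-1 : ℝ) 3, ENNReal.ofReal (dens y) with hI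
  have h9 := congrArg ENNReal.toReal h8
  simp only [ENNReal.toReal_mul, ENNReal.toReal_ofNat,
    ENNReal.toReal_ofReal (show (0 : ℝ) ≤ π / 2 by positivity)] at h9
  rw [← ENNReal.ofReal_toReal hle]
  congr 1
  field_simp
  linarith

end SO3Trace

open MeasureTheory Real in
/-- Under the normalized Haar measure of `SO(3)`, the trace has density
`y ↦ (1/(2π)) √(3-y)/√(y+1)` on `[-1, 3]`. -/
theorem haar_SO3_trace_density
    [MeasurableSpace (Matrix.specialOrthogonalGroup (Fin 3) ℝ)]
    [BorelSpace (Matrix.specialOrthogonalGroup (Fin 3) ℝ)]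
    (μ : Measure (Matrix.specialOrthogonalGroup (Fin 3) ℝ))
    [μ.IsHaarMeasure] [IsProbabilityMeasure μ] (A : Set ℝ) (hA : MeasurableSet A) :
    μ {g : Matrix.specialOrthogonalGroup (Fin 3) ℝ |
        Matrix.trace ((g : Matrix (Fin 3) (Fin 3) ℝ)) ∈ A} =
      ENNReal.ofReal
        (∫ y in A ∩ Set.Icc (-1 : ℝ) 3, (1 / (2 * π)) * Real.sqrt (3 - y) / Real.sqrt (y + 1)) := by
  exact SO3Trace.main μ hA
end

section
/- Let SO(3) be the group of 3×3 real special orthogonal matrices with normalized Haar probability measure μ, and define the rotation angle t : SO(3) → [0,π] by t(g) = arccos((tr(g) − 1)/2). Then the pushforward measure t_*μ is absolutely continuous with respect to Lebesgue measure with density s ↦ (1/π)(1 − cos s) on [0,π]; equivalently, for every Borel set A ⊆ ℝ, μ({g : t(g) ∈ A}) = ∫_{A ∩ [0,π]} (1/π)(1 − cos s) ds. -/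
namespace SO3Aux
open MeasureTheory Real

/-- squared norm of the quaternion `q`. -/
def N (q : Fin 4 → ℝ) : ℝ := q 0 ^ 2 + q 1 ^ 2 + q 2 ^ 2 + q 3 ^ 2

/-- unnormalized conjugation matrix. -/
def M (q : Fin 4 → ℝ) : Matrix (Fin 3) (Fin 3) ℝ :=
  !![q 0 ^ 2 + q 1 ^ 2 - q 2 ^ 2 - q 3 ^ 2, 2 * (q 1 * q 2 - q 0 * q 3), 2 * (q 1 * q 3 + q 0 * q 2);
     2 * (q 1 * q 2 + q 0 * q 3), q 0 ^ 2 - q 1 ^ 2 + q 2 ^ 2 - q 3 ^ 2, 2 * (q 2 * q 3 - q 0 * q 1);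
     2 * (q 1 * q 3 - q 0 * q 2), 2 * (q 2 * q 3 + q 0 * q 1), q 0 ^ 2 - q 1 ^ 2 - q 2 ^ 2 + q 3 ^ 2]

/-- matrix of left multiplication by `p`. -/
def Lm (p : Fin 4 → ℝ) : Matrix (Fin 4) (Fin 4) ℝ :=
  !![p 0, - p 1, - p 2, - p 3;
     p 1, p 0, - p 3, p 2;
     p 2, p 3, p 0, - p 1;
     p 3, - p 2, p 1, p 0]

lemma N_mul (p q : Fin 4 → ℝ) : N (Matrix.toLin' (Lm p) q) = N p * N q := by
  simp [N, Lm, Matrix.mulVec, dotProduct, Fin.sum_univ_four]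
  ring

lemma M_mul (p q : Fin 4 → ℝ) : M (Matrix.toLin' (Lm p) q) = M p * M q := by
  ext i j
  fin_cases i <;> fin_cases j <;>
  simp [M, Lm, Matrix.mulVec, dotProduct, Fin.sum_univ_four, Fin.sum_univ_three, Matrix.mul_apply] <;>
  ring

lemma det_Lm (p : Fin 4 → ℝ) : (Lm p).det = N p ^ 2 := by
  simp [Lm, N, Matrix.det_succ_row_zero, Fin.sum_univ_succ, Fin.succAbove]
  ring

lemma N_nonneg (q : Fin 4 → ℝ) : 0 ≤ N q := by unfold N; positivity

lemma N_eq_zero {q : Fin 4 → ℝ} (h : N q = 0) : q = 0 := by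
  unfold N at h
  ext i
  fin_cases i <;> simp <;> nlinarith [sq_nonneg (q 0), sq_nonneg (q 1), sq_nonneg (q 2), sq_nonneg (q 3)]

lemma M_orth (q : Fin 4 → ℝ) : M q * (M q).transpose = (N q ^ 2) • (1 : Matrix (Fin 3) (Fin 3) ℝ) := by
  ext i j
  fin_cases i <;> fin_cases j <;>
  simp [M, N, Fin.sum_univ_three, Matrix.mul_apply] <;>
  ring

lemma M_det (q : Fin 4 → ℝ) : (M q).det = N q ^ 3 := by
  simp [M, N, Matrix.det_fin_three]
  ring

lemma M_trace (q : Fin 4 → ℝ) : (M q).trace = 4 * q 0 ^ 2 - N q := by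
  simp [M, N, Matrix.trace_fin_three]
  ring

lemma mem_SO {q : Fin 4 → ℝ} (h : N q ≠ 0) :
    (N q)⁻¹ • M q ∈ Matrix.specialOrthogonalGroup (Fin 3) ℝ := by
  rw [Matrix.mem_specialOrthogonalGroup_iff, Matrix.mem_orthogonalGroup_iff]
  constructor
  · rw [Matrix.transpose_smul, Matrix.smul_mul, Matrix.mul_smul, M_orth, smul_smul, smul_smul]
    have : (N q)⁻¹ * (N q)⁻¹ * N q ^ 2 = 1 := by field_simp
    rw [this, one_smul]
  · rw [Matrix.det_smul, M_det]
    simp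
    field_simp

open Classical in
/-- rotation associated to the quaternion `q`. -/
noncomputable def R (q : Fin 4 → ℝ) : Matrix.specialOrthogonalGroup (Fin 3) ℝ :=
  if h : N q ≠ 0 then ⟨(N q)⁻¹ • M q, mem_SO h⟩ else 1

lemma R_val {q : Fin 4 → ℝ} (h : N q ≠ 0) : (R q : Matrix (Fin 3) (Fin 3) ℝ) = (N q)⁻¹ • M q := by
  simp [R, h]

lemma R_mul {p q : Fin 4 → ℝ} (hp : N p ≠ 0) (hq : N q ≠ 0) :
    R (Matrix.toLin' (Lm p) q) = R p * R q := by
  apply Subtype.ext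
  have h : N (Matrix.toLin' (Lm p) q) ≠ 0 := by rw [N_mul]; exact mul_ne_zero hp hq
  change _ = (R p : Matrix (Fin 3) (Fin 3) ℝ) * (R q : Matrix (Fin 3) (Fin 3) ℝ)
  rw [R_val h, R_val hp, R_val hq, N_mul, M_mul, Matrix.smul_mul, Matrix.mul_smul, smul_smul, mul_inv]

lemma M_smul (c : ℝ) (q : Fin 4 → ℝ) : M (c • q) = c ^ 2 • M q := by
  ext i j
  fin_cases i <;> fin_cases j <;> simp [M] <;> ring

lemma N_smul (c : ℝ) (q : Fin 4 → ℝ) : N (c • q) = c ^ 2 * N q := by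
  simp [N]; ring

lemma R_smul {c : ℝ} (hc : c ≠ 0) {q : Fin 4 → ℝ} (hq : N q ≠ 0) : R (c • q) = R q := by
  apply Subtype.ext
  have h : N (c • q) ≠ 0 := by rw [N_smul]; exact mul_ne_zero (pow_ne_zero _ hc) hq
  rw [R_val h, R_val hq, N_smul, M_smul, smul_smul]
  congr 1
  field_simp

lemma N_cont : Continuous N := by unfold N; fun_prop

lemma M_cont : Continuous M := by
  unfold M
  refine continuous_matrix ?_
  intro i j
  fin_cases i <;> fin_cases j <;> simp <;> fun_prop

lemma R_measurable [MeasurableSpace (Matrix.specialOrthogonalGroup (Fin 3) ℝ)]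
    [BorelSpace (Matrix.specialOrthogonalGroup (Fin 3) ℝ)] : Measurable R := by
  apply measurable_of_continuousOn_compl_singleton 0
  rw [continuousOn_iff_continuous_domRestrict, continuous_induced_rng]
  have h0 : ∀ x : ({0}ᶜ : Set (Fin 4 → ℝ)), N x ≠ 0 := fun x h => x.2 (N_eq_zero h)
  have : (Subtype.val ∘ ({0}ᶜ : Set (Fin 4 → ℝ)).domRestrict R) =
      fun x : ({0}ᶜ : Set (Fin 4 → ℝ)) => (N x)⁻¹ • M x := by
    ext1 x
    exact R_val (h0 x)
  rw [this]
  exact ((N_cont.comp continuous_subtype_val).inv₀ h0).smul (M_cont.comp continuous_subtype_val)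

/-- the symmetric matrix equal to `4 q qᵀ` when `g` is the rotation of the unit quaternion `q`. -/
def K (g : Matrix (Fin 3) (Fin 3) ℝ) : Matrix (Fin 4) (Fin 4) ℝ :=
  !![1 + g 0 0 + g 1 1 + g 2 2, g 2 1 - g 1 2, g 0 2 - g 2 0, g 1 0 - g 0 1;
     g 2 1 - g 1 2, 1 + g 0 0 - g 1 1 - g 2 2, g 0 1 + g 1 0, g 0 2 + g 2 0;
     g 0 2 - g 2 0, g 0 1 + g 1 0, 1 - g 0 0 + g 1 1 - g 2 2, g 1 2 + g 2 1;
     g 1 0 - g 0 1, g 0 2 + g 2 0, g 1 2 + g 2 1, 1 - g 0 0 - g 1 1 + g 2 2]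

lemma of_K (g : Matrix (Fin 3) (Fin 3) ℝ) (q : Fin 4 → ℝ) (k : ℝ)
    (h : ∀ i l, q i * q l = k * K g i l) : N q = 4 * k ∧ M q = N q • g := by
  have hN : N q = 4 * k := by
    simp only [N, sq, h]
    simp [K]
    ring
  refine ⟨hN, ?_⟩
  rw [hN]
  ext i j
  fin_cases i <;> fin_cases j <;> simp only [M, sq, h] <;> simp [K] <;> ring

lemma K_rank (g : Matrix (Fin 3) (Fin 3) ℝ) (h2 : g * g.transpose = 1) (h3 : g.transpose * g = 1)
    (hadj : g.adjugate = g.transpose) (j i l : Fin 4) :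
    K g i j * K g l j = K g j j * K g i l := by
  rw [← Matrix.ext_iff] at h2 h3 hadj
  rw [Matrix.adjugate_fin_three] at hadj
  simp only [Fin.forall_fin_succ, Matrix.mul_apply, Fin.sum_univ_three, Matrix.transpose_apply] at h2 h3 hadj
  simp at h2 h3 hadj
  obtain ⟨⟨a1, a2, a3⟩, ⟨a4, a5, a6⟩, a7, a8, a9⟩ := h2
  obtain ⟨⟨b1, b2, b3⟩, ⟨b4, b5, b6⟩, b7, b8, b9⟩ := h3
  obtain ⟨⟨c1, c2, c3⟩, ⟨c4, c5, c6⟩, c7, c8, c9⟩ := hadj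
  clear a4 a7 a8 b4 b7 b8
  fin_cases j <;> fin_cases i <;> fin_cases l <;> simp [K] <;> linarith

lemma R_surj (g : Matrix.specialOrthogonalGroup (Fin 3) ℝ) : ∃ p, N p ≠ 0 ∧ R p = g := by
  obtain ⟨g, hg⟩ := g
  obtain ⟨h1, hd⟩ := Matrix.mem_specialOrthogonalGroup_iff.1 hg
  have h2 := (Matrix.mem_orthogonalGroup_iff (Fin 3) ℝ).1 h1
  have h3 := (Matrix.mem_orthogonalGroup_iff' (Fin 3) ℝ).1 h1
  have hadj : g.adjugate = g.transpose := by
    calc g.adjugate = g.adjugate * (g * g.transpose) := by rw [h2, mul_one]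
      _ = g.transpose := by rw [← mul_assoc, Matrix.adjugate_mul, hd, one_smul, one_mul]
  obtain ⟨j, hj⟩ : ∃ j, K g j j ≠ 0 := by
    by_contra! hc
    have h0 := hc 0
    have h1 := hc 1
    have h2 := hc 2
    have h3 := hc 3
    simp [K] at h0 h1 h2 h3
    linarith
  obtain ⟨hN, hM⟩ := of_K g (fun i => K g i j) (K g j j) (fun i l => K_rank g h2 h3 hadj j i l)
  have hp : N (fun i => K g i j) ≠ 0 := by
    rw [hN]; exact mul_ne_zero (by norm_num) hj
  refine ⟨_, hp, Subtype.ext ?_⟩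
  rw [R_val hp, hM, smul_smul, inv_mul_cancel₀ hp, one_smul]

/-- every rotation comes from a unit quaternion -/
lemma R_surj' (g : Matrix.specialOrthogonalGroup (Fin 3) ℝ) : ∃ p, N p = 1 ∧ R p = g := by
  obtain ⟨p, hp, rfl⟩ := R_surj g
  have hpos : 0 < N p := lt_of_le_of_ne (N_nonneg p) (Ne.symm hp)
  have hs : (√(N p))⁻¹ ≠ 0 := by positivity
  refine ⟨(√(N p))⁻¹ • p, ?_, R_smul hs hp⟩
  rw [N_smul, inv_pow, Real.sq_sqrt hpos.le, inv_mul_cancel₀ hp]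

/-- punctured open unit ball of the quaternions. -/
def B : Set (Fin 4 → ℝ) := {q | 0 < N q ∧ N q < 1}

lemma B_open : IsOpen B :=
  (isOpen_lt continuous_const N_cont).inter (isOpen_lt N_cont continuous_const)

lemma B_finite : volume B < ⊤ := by
  have hsub : B ⊆ Set.Icc (fun _ => (-1 : ℝ)) (fun _ => 1) := by
    intro q hq
    have h1 := hq.2
    unfold N at h1
    constructor <;> intro i <;> fin_cases i <;> simp <;>
      nlinarith [sq_nonneg (q 0), sq_nonneg (q 1), sq_nonneg (q 2), sq_nonneg (q 3)]
  exact lt_of_le_of_lt (measure_mono hsub) isCompact_Icc.measure_lt_top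

lemma B_pos : volume B ≠ 0 := by
  apply (B_open.measure_pos volume ⟨fun i => if i = 0 then 1 / 2 else 0, ?_⟩).ne'
  simp [B, N]
  norm_num

lemma L_preserving {p : Fin 4 → ℝ} (hp : N p = 1) :
    MeasurePreserving (Matrix.toLin' (Lm p)) (volume.restrict B) (volume.restrict B) := by
  have h1 : MeasurePreserving (Matrix.toLin' (Lm p)) (volume : Measure (Fin 4 → ℝ)) volume := by
    refine ⟨(LinearMap.continuous_of_finiteDimensional _).measurable, ?_⟩
    rw [Real.map_matrix_volume_pi_eq_smul_volume_pi (by rw [det_Lm, hp]; norm_num), det_Lm, hp]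
    simp
  have h2 := h1.restrict_preimage B_open.measurableSet
  have h3 : (Matrix.toLin' (Lm p)) ⁻¹' B = B := by
    ext q
    simp only [B, Set.mem_preimage, Set.mem_ofPred_eq, N_mul, hp, one_mul]
  rwa [h3] at h2

instance instLC : LocallyCompactSpace (Matrix.specialOrthogonalGroup (Fin 3) ℝ) := by
  have hc : IsClosed ((Matrix.specialOrthogonalGroup (Fin 3) ℝ : Set (Matrix (Fin 3) (Fin 3) ℝ))) := by
    have : ((Matrix.specialOrthogonalGroup (Fin 3) ℝ : Set (Matrix (Fin 3) (Fin 3) ℝ))) =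
        {g | g * g.transpose = 1} ∩ {g | g.det = 1} := by
      ext g
      simp only [SetLike.mem_coe, Matrix.mem_specialOrthogonalGroup_iff,
        Matrix.mem_orthogonalGroup_iff]
      rfl
    rw [this]
    refine (isClosed_eq ?_ continuous_const).inter (isClosed_eq ?_ continuous_const)
    · exact continuous_id.matrix_mul continuous_id.matrix_transpose
    · exact continuous_id.matrix_det
  have : LocallyCompactSpace (Matrix (Fin 3) (Fin 3) ℝ) :=
    inferInstanceAs (LocallyCompactSpace (Fin 3 → Fin 3 → ℝ))
  exact hc.isClosedEmbedding_subtypeVal.locallyCompactSpace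

instance instSC : SecondCountableTopology (Matrix.specialOrthogonalGroup (Fin 3) ℝ) := by
  have : SecondCountableTopology (Matrix (Fin 3) (Fin 3) ℝ) :=
    inferInstanceAs (SecondCountableTopology (Fin 3 → Fin 3 → ℝ))
  exact TopologicalSpace.Subtype.secondCountableTopology _

lemma haar_eq [MeasurableSpace (Matrix.specialOrthogonalGroup (Fin 3) ℝ)]
    [BorelSpace (Matrix.specialOrthogonalGroup (Fin 3) ℝ)]
    (μ : Measure (Matrix.specialOrthogonalGroup (Fin 3) ℝ))
    [μ.IsHaarMeasure] :
    ∃ c : ENNReal, (volume.restrict B).map R = c • μ := by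
  have hfin : IsFiniteMeasure ((volume : Measure (Fin 4 → ℝ)).restrict B) :=
    ⟨by simpa using B_finite⟩
  have : Measure.IsMulLeftInvariant ((volume.restrict B).map R) := by
    refine ⟨fun g => ?_⟩
    obtain ⟨p, hp, rfl⟩ := R_surj' g
    rw [Measure.map_map (measurable_const_mul _) R_measurable]
    have h1 : (volume.restrict B).map ((fun x => R p * x) ∘ R) =
        (volume.restrict B).map (R ∘ Matrix.toLin' (Lm p)) := by
      apply Measure.map_congr
      filter_upwards [ae_restrict_mem B_open.measurableSet] with q hq
      exact (R_mul (by rw [hp]; norm_num) hq.1.ne').symm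
    rw [h1, ← Measure.map_map R_measurable (L_preserving hp).measurable, (L_preserving hp).map_eq]
  exact ⟨_, Measure.isMulLeftInvariant_eq_smul ((volume.restrict B).map R) μ⟩

open Set in
lemma lintegral_norm3 (f : ℝ → ENNReal) (hf : Measurable f) :
    ∫⁻ x : EuclideanSpace ℝ (Fin 3), f ‖x‖ =
      (volume : Measure (EuclideanSpace ℝ (Fin 3))).toSphere univ *
        ∫⁻ r in Ioi (0 : ℝ), ENNReal.ofReal (r ^ 2) * f r := by
  set μ := (volume : Measure (EuclideanSpace ℝ (Fin 3)))
  calc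
    ∫⁻ x, f (‖x‖) ∂μ
      = ∫⁻ x : ({(0)}ᶜ : Set (EuclideanSpace ℝ (Fin 3))), f (‖x.1‖) ∂(μ.comap (↑)) := by
      rw [lintegral_subtype_comap (measurableSet_singleton _).compl fun x ↦ f (‖x‖),
        restrict_compl_singleton]
    _ = ∫⁻ x, f x.2 ∂μ.toSphere.prod (.volumeIoiPow (Module.finrank ℝ (EuclideanSpace ℝ (Fin 3)) - 1)) := by
      simpa using μ.measurePreserving_homeomorphUnitSphereProd.lintegral_comp_emb
        (Homeomorph.measurableEmbedding _) (f ∘ Subtype.val ∘ Prod.snd)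
    _ = μ.toSphere univ * ∫⁻ x : Ioi (0 : ℝ), f x ∂.volumeIoiPow 2 := by
      rw [lintegral_prod _ (by fun_prop)]
      simp [mul_comm]
    _ = _ := by
      simp only [Measure.volumeIoiPow]
      rw [lintegral_withDensity_eq_lintegral_mul _ (by fun_prop) (by fun_prop)]
      congr 1
      exact lintegral_subtype_comap measurableSet_Ioi fun a ↦ ENNReal.ofReal (a ^ 2) * f a

open Set in
lemma trig_subst (A : Set ℝ) (hA : MeasurableSet A) :
    ∫⁻ θ in Ioo 0 π, ENNReal.ofReal (2 * sin θ ^ 2) * A.indicator 1 (arccos (2 * cos θ ^ 2 - 1)) =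
      ∫⁻ s in Ioo 0 π, ENNReal.ofReal (1 - cos s) * A.indicator 1 s := by
  have hm : Measurable (fun s => ENNReal.ofReal (1 - cos s) * A.indicator (1 : ℝ → ENNReal) s) :=
    Measurable.mul (by fun_prop) (measurable_one.indicator hA)
  have e1 : ∫⁻ s in Ioo 0 π, ENNReal.ofReal (1 - cos s) * A.indicator (1 : ℝ → ENNReal) s =
      2 * ∫⁻ θ in Ioo 0 (π / 2), ENNReal.ofReal (2 * sin θ ^ 2) *
        A.indicator 1 (arccos (2 * cos θ ^ 2 - 1)) := by
    have himg : Ioo 0 π = (fun θ : ℝ => 2 * θ) '' Ioo 0 (π / 2) := by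
      ext s
      constructor
      · intro hs
        exact ⟨s / 2, ⟨by linarith [hs.1], by linarith [hs.2]⟩, by ring⟩
      · rintro ⟨θ, hθ, rfl⟩
        exact ⟨by linarith [hθ.1], by linarith [hθ.2]⟩
    rw [himg, lintegral_image_eq_lintegral_abs_deriv_mul (f' := fun _ => 2) measurableSet_Ioo
      (fun x _ => by simpa using ((hasDerivAt_id x).const_mul (2 : ℝ)).hasDerivWithinAt)
      (fun x _ y _ h => by simpa using h), ← lintegral_const_mul' _ _ (by simp)]
    refine setLIntegral_congr_fun measurableSet_Ioo (fun θ hθ => ?_)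
    have h1 : arccos (2 * cos θ ^ 2 - 1) = 2 * θ := by
      rw [← cos_two_mul, arccos_cos] <;> linarith [hθ.1, hθ.2]
    have h2 : 1 - cos (2 * θ) = 2 * sin θ ^ 2 := by
      rw [cos_two_mul, cos_sq']; ring
    simp only [h1, h2]
    simp
  have e2 : ∫⁻ s in Ioo 0 π, ENNReal.ofReal (1 - cos s) * A.indicator (1 : ℝ → ENNReal) s =
      2 * ∫⁻ θ in Ioo (π / 2) π, ENNReal.ofReal (2 * sin θ ^ 2) *
        A.indicator 1 (arccos (2 * cos θ ^ 2 - 1)) := by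
    have himg : Ioo 0 π = (fun θ : ℝ => 2 * π - 2 * θ) '' Ioo (π / 2) π := by
      ext s
      constructor
      · intro hs
        exact ⟨π - s / 2, ⟨by linarith [hs.2], by linarith [hs.1]⟩, by ring⟩
      · rintro ⟨θ, hθ, rfl⟩
        exact ⟨by linarith [hθ.2], by linarith [hθ.1]⟩
    rw [himg, lintegral_image_eq_lintegral_abs_deriv_mul (f' := fun _ => -2) measurableSet_Ioo
      (fun x _ => by simpa using (((hasDerivAt_id x).const_mul (2 : ℝ)).const_sub (2 * π)).hasDerivWithinAt)
      (fun x _ y _ h => by simpa using h), ← lintegral_const_mul' _ _ (by simp)]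
    refine setLIntegral_congr_fun measurableSet_Ioo (fun θ hθ => ?_)
    have h0 : cos (2 * π - 2 * θ) = 2 * cos θ ^ 2 - 1 := by
      rw [cos_two_pi_sub, cos_two_mul]
    have h1 : arccos (2 * cos θ ^ 2 - 1) = 2 * π - 2 * θ := by
      rw [← h0, arccos_cos] <;> linarith [hθ.1, hθ.2]
    have h2 : 1 - cos (2 * π - 2 * θ) = 2 * sin θ ^ 2 := by
      rw [h0, cos_sq']; ring
    simp only [h1, h2]
    simp
  have hsplit : Ioo 0 π =ᵐ[volume] (Ioo 0 (π / 2) ∪ Ioo (π / 2) π : Set ℝ) := by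
    have h : Ioo 0 (π / 2) ∪ Ico (π / 2) π = Ioo 0 π :=
      Ioo_union_Ico_eq_Ioo (by positivity) (by linarith [pi_pos])
    rw [← h]
    exact (ae_eq_refl _).union Ioo_ae_eq_Ico.symm
  rw [← ENNReal.mul_right_inj (a := 2) (by simp) (by simp), setLIntegral_congr hsplit,
    lintegral_union measurableSet_Ioo, mul_add, ← e1, ← e2, two_mul]
  rw [Set.disjoint_left]
  intro x hx hy
  linarith [hx.2, hy.1]

open Set in
/-- region in the half plane -/
def S (A : Set ℝ) : Set (ℝ × ℝ) :=
  {x | 0 < x.1 ^ 2 + x.2 ^ 2 ∧ x.1 ^ 2 + x.2 ^ 2 < 1 ∧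
    arccos (2 * (x.1 ^ 2 / (x.1 ^ 2 + x.2 ^ 2)) - 1) ∈ A}

lemma S_meas {A : Set ℝ} (hA : MeasurableSet A) : MeasurableSet (S A) := by
  have : Measurable fun x : ℝ × ℝ => arccos (2 * (x.1 ^ 2 / (x.1 ^ 2 + x.2 ^ 2)) - 1) :=
    Real.continuous_arccos.measurable.comp (by fun_prop)
  have h1 : MeasurableSet {x : ℝ × ℝ | 0 < x.1 ^ 2 + x.2 ^ 2} :=
    measurableSet_lt (by fun_prop) (by fun_prop)
  have h2 : MeasurableSet {x : ℝ × ℝ | x.1 ^ 2 + x.2 ^ 2 < 1} :=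
    measurableSet_lt (by fun_prop) (by fun_prop)
  exact h1.inter (h2.inter (this hA))

open Set in
lemma plane_integral {A : Set ℝ} (hA : MeasurableSet A) :
    ∫⁻ x : ℝ × ℝ, (Ioi (0 : ℝ)).indicator 1 x.2 *
      (ENNReal.ofReal (x.2 ^ 2) * (S A).indicator 1 x) =
    (∫⁻ ρ in Ioi (0 : ℝ), ENNReal.ofReal (ρ ^ 3 / 2) * (Iio (1 : ℝ)).indicator 1 ρ) *
      ∫⁻ s in Ioo 0 π, ENNReal.ofReal (1 - cos s) * A.indicator 1 s := by
  rw [← trig_subst A hA, ← lintegral_comp_polarCoord_symm]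
  have htar : polarCoord.target = Ioi (0 : ℝ) ×ˢ Ioo (-π) π := rfl
  have hmarc : Measurable fun θ : ℝ => A.indicator (1 : ℝ → ENNReal) (arccos (2 * cos θ ^ 2 - 1)) :=
    (measurable_one.indicator hA).comp (Real.continuous_arccos.measurable.comp (by fun_prop))
  have hsub : ∫⁻ θ in Ioo 0 π, ENNReal.ofReal (2 * sin θ ^ 2) *
        A.indicator (1 : ℝ → ENNReal) (arccos (2 * cos θ ^ 2 - 1)) =
      ∫⁻ θ in Ioo (-π) π, (Ioi (0 : ℝ)).indicator 1 θ * (ENNReal.ofReal (2 * sin θ ^ 2) *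
        A.indicator (1 : ℝ → ENNReal) (arccos (2 * cos θ ^ 2 - 1))) := by
    have : Ioo 0 π = Ioi 0 ∩ Ioo (-π) π := by
      ext x
      simp only [mem_Ioo, mem_inter_iff, mem_Ioi]
      constructor
      · intro h; exact ⟨h.1, by linarith [h.1, pi_pos], h.2⟩
      · intro h; exact ⟨h.1, h.2.2⟩
    rw [this, ← Measure.restrict_restrict measurableSet_Ioi, ← lintegral_indicator measurableSet_Ioi]
    refine lintegral_congr fun θ => ?_
    by_cases h : θ ∈ Ioi (0 : ℝ)
    · rw [indicator_of_mem h, indicator_of_mem h]; simp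
    · rw [indicator_of_notMem h, indicator_of_notMem h]; simp
  rw [hsub, htar, Measure.volume_eq_prod, ← Measure.prod_restrict, ← lintegral_prod_mul]
  rotate_left
  · exact (Measurable.mul (by fun_prop) (measurable_one.indicator measurableSet_Iio)).aemeasurable
  · exact (Measurable.mul (measurable_one.indicator measurableSet_Ioi)
      (Measurable.mul (by fun_prop) hmarc)).aemeasurable
  rw [Measure.prod_restrict]
  refine setLIntegral_congr_fun (measurableSet_Ioi.prod measurableSet_Ioo) ?_
  rintro ⟨ρ, θ⟩ ⟨hρ, hθ⟩
  have hρ : 0 < ρ := hρ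
  have hθ1 : -π < θ := hθ.1
  have hθ2 : θ < π := hθ.2
  have hsymm : polarCoord.symm (ρ, θ) = (ρ * cos θ, ρ * sin θ) := rfl
  have hsq : (ρ * cos θ) ^ 2 + (ρ * sin θ) ^ 2 = ρ ^ 2 := by
    rw [mul_pow, mul_pow, ← mul_add, cos_sq_add_sin_sq, mul_one]
  have hdiv : (ρ * cos θ) ^ 2 / ρ ^ 2 = cos θ ^ 2 := by field_simp
  simp only [hsymm, smul_eq_mul]
  by_cases hpos : 0 < θ
  · have hs : 0 < sin θ := sin_pos_of_pos_of_lt_pi hpos hθ2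
    have hm1 : ρ * sin θ ∈ Ioi (0 : ℝ) := mul_pos hρ hs
    rw [indicator_of_mem hm1, indicator_of_mem (show θ ∈ Ioi (0 : ℝ) from hpos)]
    have hS : (S A).indicator (1 : ℝ × ℝ → ENNReal) (ρ * cos θ, ρ * sin θ) =
        (Iio (1 : ℝ)).indicator 1 ρ * A.indicator 1 (arccos (2 * cos θ ^ 2 - 1)) := by
      have hiff : (ρ * cos θ, ρ * sin θ) ∈ S A ↔ ρ ∈ Iio (1 : ℝ) ∧ arccos (2 * cos θ ^ 2 - 1) ∈ A := by
        have h1 : ρ ^ 2 < 1 ↔ ρ < 1 := by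
          rw [sq_lt_one_iff₀ hρ.le]
        have h2 : 0 < ρ ^ 2 := by positivity
        simp only [S, mem_ofPred_eq, hsq, hdiv, mem_Iio, h1, h2, true_and]
      by_cases ha : ρ ∈ Iio (1 : ℝ) <;> by_cases hb : arccos (2 * cos θ ^ 2 - 1) ∈ A <;>
        simp only [indicator, hiff, ha, hb] <;> simp
    rw [hS]
    have : ENNReal.ofReal ρ * ENNReal.ofReal ((ρ * sin θ) ^ 2) =
        ENNReal.ofReal (ρ ^ 3 / 2) * ENNReal.ofReal (2 * sin θ ^ 2) := by
      rw [← ENNReal.ofReal_mul hρ.le, ← ENNReal.ofReal_mul (by positivity)]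
      congr 1
      ring
    simp only [Pi.one_apply, one_mul]
    calc _ = (ENNReal.ofReal ρ * ENNReal.ofReal ((ρ * sin θ) ^ 2)) *
          ((Iio (1 : ℝ)).indicator 1 ρ * A.indicator 1 (arccos (2 * cos θ ^ 2 - 1))) := by ring
      _ = _ := by rw [this]; ring
  · have hs : sin θ ≤ 0 := sin_nonpos_of_nonpos_of_neg_pi_le (not_lt.1 hpos) hθ1.le
    have hm1 : ρ * sin θ ∉ Ioi (0 : ℝ) := by
      simp only [mem_Ioi, not_lt]
      exact mul_nonpos_of_nonneg_of_nonpos hρ.le hs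
    rw [indicator_of_notMem hm1, indicator_of_notMem (show θ ∉ Ioi (0 : ℝ) from hpos)]
    simp

open Set in
lemma volume_formula : ∃ C : ENNReal, ∀ A : Set ℝ, MeasurableSet A →
    volume {q : Fin 4 → ℝ | q ∈ B ∧ arccos (2 * (q 0 ^ 2 / N q) - 1) ∈ A} =
      C * ∫⁻ s in Ioo 0 π, ENNReal.ofReal (1 - cos s) * A.indicator 1 s := by
  refine ⟨(volume : Measure (EuclideanSpace ℝ (Fin 3))).toSphere univ *
    (∫⁻ ρ in Ioi (0 : ℝ), ENNReal.ofReal (ρ ^ 3 / 2) * (Iio (1 : ℝ)).indicator 1 ρ), ?_⟩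
  intro A hA
  set c := (volume : Measure (EuclideanSpace ℝ (Fin 3))).toSphere univ
  rw [mul_assoc, ← plane_integral hA]
  have hSm : Measurable ((S A).indicator (1 : ℝ × ℝ → ENNReal)) := measurable_one.indicator (S_meas hA)
  have hT : MeasurableSet {x : ℝ × EuclideanSpace ℝ (Fin 3) | (x.1, ‖x.2‖) ∈ S A} :=
    (measurable_fst.prodMk measurable_snd.norm) (S_meas hA)
  have hmp : MeasurePreserving (fun q : Fin 4 → ℝ =>
      ((q 0, WithLp.toLp 2 (fun i : Fin 3 => q i.succ)) : ℝ × EuclideanSpace ℝ (Fin 3))) := by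
    have h1 := volume_preserving_piFinSuccAbove (fun _ : Fin 4 => ℝ) 0
    have h2 : MeasurePreserving (Prod.map (id : ℝ → ℝ) (@WithLp.toLp 2 (Fin 3 → ℝ))) :=
      (MeasurePreserving.id volume).prod (PiLp.volume_preserving_toLp (Fin 3))
    exact h2.comp h1
  have hset : {q : Fin 4 → ℝ | q ∈ B ∧ arccos (2 * (q 0 ^ 2 / N q) - 1) ∈ A} =
      (fun q : Fin 4 → ℝ =>
      ((q 0, WithLp.toLp 2 (fun i : Fin 3 => q i.succ)) : ℝ × EuclideanSpace ℝ (Fin 3))) ⁻¹'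
      {x : ℝ × EuclideanSpace ℝ (Fin 3) | (x.1, ‖x.2‖) ∈ S A} := by
    ext q
    have hN : q 0 ^ 2 + ‖(WithLp.toLp 2 (fun i : Fin 3 => q i.succ) : EuclideanSpace ℝ (Fin 3))‖ ^ 2 = N q := by
      rw [EuclideanSpace.norm_sq_eq]
      simp [Fin.sum_univ_three, N]
      ring_nf
    simp only [S, B, mem_ofPred_eq, mem_preimage, hN, and_assoc]
  rw [hset, hmp.measure_preimage hT.nullMeasurableSet, ← lintegral_indicator_one hT,
    Measure.volume_eq_prod, lintegral_prod _ (measurable_one.indicator hT).aemeasurable,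
    Measure.volume_eq_prod, lintegral_prod, ← lintegral_const_mul]
  rotate_left
  · refine Measurable.lintegral_prod_right' (f := fun x : ℝ × ℝ => (Ioi (0 : ℝ)).indicator 1 x.2 *
      (ENNReal.ofReal (x.2 ^ 2) * (S A).indicator 1 x)) ?_
    exact Measurable.mul ((measurable_one.indicator measurableSet_Ioi).comp measurable_snd)
      (Measurable.mul (by fun_prop) hSm)
  · exact (Measurable.mul ((measurable_one.indicator measurableSet_Ioi).comp measurable_snd)
      (Measurable.mul (by fun_prop) hSm)).aemeasurable
  refine lintegral_congr fun a => ?_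
  have := lintegral_norm3 (fun r => (S A).indicator 1 (a, r)) (hSm.comp (by fun_prop))
  refine Eq.trans ?_ (this.trans ?_)
  · rfl
  · congr 1
    rw [← lintegral_indicator measurableSet_Ioi]
    refine lintegral_congr fun r => ?_
    by_cases h : r ∈ Ioi (0 : ℝ)
    · simp only [indicator_of_mem h]; simp
    · simp only [indicator_of_notMem h]; simp

lemma trace_R {q : Fin 4 → ℝ} (h : N q ≠ 0) :
    (Matrix.trace (R q : Matrix (Fin 3) (Fin 3) ℝ) - 1) / 2 = 2 * (q 0 ^ 2 / N q) - 1 := by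
  rw [R_val h, Matrix.trace_smul, M_trace, smul_eq_mul]
  field_simp
  ring

end SO3Aux

open MeasureTheory Real in
/-- Under the normalized Haar measure of `SO(3)`, the rotation angle
`t(g) = arccos((tr g - 1)/2)` has density `s ↦ (1/π)(1 - cos s)` on `[0, π]`. -/
theorem haar_SO3_rotation_angle_density
    [MeasurableSpace (Matrix.specialOrthogonalGroup (Fin 3) ℝ)]
    [BorelSpace (Matrix.specialOrthogonalGroup (Fin 3) ℝ)]
    (μ : Measure (Matrix.specialOrthogonalGroup (Fin 3) ℝ))
    [μ.IsHaarMeasure] [IsProbabilityMeasure μ] (A : Set ℝ) (hA : MeasurableSet A) :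
    μ {g : Matrix.specialOrthogonalGroup (Fin 3) ℝ |
        arccos ((Matrix.trace ((g : Matrix (Fin 3) (Fin 3) ℝ)) - 1) / 2) ∈ A} =
      ENNReal.ofReal (∫ s in A ∩ Set.Icc 0 π, (1 / π) * (1 - cos s)) := by
  obtain ⟨c, hc⟩ := SO3Aux.haar_eq μ
  obtain ⟨C, hC⟩ := SO3Aux.volume_formula
  have hcont : Continuous fun g : Matrix.specialOrthogonalGroup (Fin 3) ℝ =>
      arccos ((Matrix.trace ((g : Matrix (Fin 3) (Fin 3) ℝ)) - 1) / 2) := by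
    have : Continuous fun g : Matrix.specialOrthogonalGroup (Fin 3) ℝ =>
        Matrix.trace ((g : Matrix (Fin 3) (Fin 3) ℝ)) := continuous_subtype_val.matrix_trace
    exact Real.continuous_arccos.comp ((this.sub continuous_const).div_const 2)
  have key : ∀ A : Set ℝ, MeasurableSet A →
      c * μ {g : Matrix.specialOrthogonalGroup (Fin 3) ℝ |
        arccos ((Matrix.trace ((g : Matrix (Fin 3) (Fin 3) ℝ)) - 1) / 2) ∈ A} =
      C * ENNReal.ofReal (∫ s in A ∩ Set.Icc 0 π, (1 - cos s)) := by
    intro A hA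
    have hm : MeasurableSet {g : Matrix.specialOrthogonalGroup (Fin 3) ℝ |
        arccos ((Matrix.trace ((g : Matrix (Fin 3) (Fin 3) ℝ)) - 1) / 2) ∈ A} :=
      hcont.measurable hA
    rw [← smul_eq_mul, ← Measure.smul_apply, ← hc, Measure.map_apply SO3Aux.R_measurable hm,
      Measure.restrict_apply (SO3Aux.R_measurable hm)]
    have hset : SO3Aux.R ⁻¹' {g : Matrix.specialOrthogonalGroup (Fin 3) ℝ |
        arccos ((Matrix.trace ((g : Matrix (Fin 3) (Fin 3) ℝ)) - 1) / 2) ∈ A} ∩ SO3Aux.B =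
        {q : Fin 4 → ℝ | q ∈ SO3Aux.B ∧ arccos (2 * (q 0 ^ 2 / SO3Aux.N q) - 1) ∈ A} := by
      ext q
      simp only [Set.mem_inter_iff, Set.mem_preimage, Set.mem_ofPred_eq]
      rw [and_comm]
      refine and_congr_right fun hq => ?_
      rw [SO3Aux.trace_R hq.1.ne']
    rw [hset, hC A hA]
    congr 1
    have hae : (A ∩ Set.Icc 0 π : Set ℝ) =ᵐ[volume] (A ∩ Set.Ioo 0 π : Set ℝ) :=
      (ae_eq_refl _).inter Ioo_ae_eq_Icc.symm
    rw [setIntegral_congr_set hae, ofReal_integral_eq_lintegral_ofReal,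
      ← Measure.restrict_restrict hA, ← lintegral_indicator hA]
    · refine lintegral_congr fun s => ?_
      by_cases h : s ∈ A
      · rw [Set.indicator_of_mem h, Set.indicator_of_mem h]; simp
      · rw [Set.indicator_of_notMem h, Set.indicator_of_notMem h]; simp
    · have hI : IntegrableOn (fun s => 1 - cos s) (Set.Icc 0 π) :=
        (by fun_prop : Continuous fun s => 1 - cos s).continuousOn.integrableOn_Icc
      exact hI.mono_set (Set.inter_subset_right.trans Set.Ioo_subset_Icc_self)
    · exact Filter.Eventually.of_forall fun s => sub_nonneg.2 (cos_le_one s)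
  have hint : ∫ s in (Set.univ : Set ℝ) ∩ Set.Icc 0 π, (1 - cos s) = π := by
    rw [Set.univ_inter, integral_Icc_eq_integral_Ioc,
      ← intervalIntegral.integral_of_le pi_pos.le, intervalIntegral.integral_sub (by simp)
      (Real.continuous_cos.intervalIntegrable _ _)]
    simp
  have hu := key Set.univ MeasurableSet.univ
  rw [hint] at hu
  have hcu : c = C * ENNReal.ofReal π := by
    rw [← hu]
    simp
  have hcB : c = volume SO3Aux.B := by
    have h := congrArg (fun m : Measure (Matrix.specialOrthogonalGroup (Fin 3) ℝ) => m Set.univ) hc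
    simp only [Measure.map_apply SO3Aux.R_measurable MeasurableSet.univ, Set.preimage_univ,
      Measure.restrict_apply_univ, Measure.smul_apply, measure_univ, smul_eq_mul, mul_one] at h
    exact h.symm
  have hc0 : c ≠ 0 := by rw [hcB]; exact SO3Aux.B_pos
  have hct : c ≠ ⊤ := by rw [hcB]; exact SO3Aux.B_finite.ne
  rw [← ENNReal.mul_right_inj hc0 hct, key A hA, integral_const_mul,
    ENNReal.ofReal_mul (by positivity), ← mul_assoc]
  congr 1
  rw [hcu, mul_assoc, ← ENNReal.ofReal_mul pi_pos.le]
  have : π * (1 / π) = 1 := by field_simp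
  rw [this]
  simp
end

section
/- Let SO(3) be the group of 3×3 real special orthogonal matrices, and define d(g,h) = arccos((tr(g h⁻¹) − 1)/2) for g,h ∈ SO(3) (the distance induced by the bi-invariant Riemannian metric). Then d is NOT a restricted negative definite kernel on SO(3): there exist n, elements g₁,…,gₙ ∈ SO(3) and ξ₁,…,ξₙ ∈ ℂ with ∑ᵢ ξᵢ = 0 such that the real part of ∑_{i,j} d(gᵢ,gⱼ) ξᵢ conj(ξⱼ) is strictly positive. -/
/-- The eight integer rotation matrices: the Klein four-group of diagonal sign matrices, and its
coset by the cyclic permutation of the coordinate axes. -/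
def rotZ : Fin 8 → Matrix (Fin 3) (Fin 3) ℤ := ![
  !![1, 0, 0; 0, 1, 0; 0, 0, 1],
  !![1, 0, 0; 0, -1, 0; 0, 0, -1],
  !![-1, 0, 0; 0, 1, 0; 0, 0, -1],
  !![-1, 0, 0; 0, -1, 0; 0, 0, 1],
  !![0, 1, 0; 0, 0, 1; 1, 0, 0],
  !![0, 1, 0; 0, 0, -1; -1, 0, 0],
  !![0, -1, 0; 0, 0, 1; -1, 0, 0],
  !![0, -1, 0; 0, 0, -1; 1, 0, 0]]

/-- The table of traces of `g i * (g j)⁻¹`. -/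
def trZ (i j : Fin 8) : ℤ := if i = j then 3 else if (i.1 < 4 ↔ j.1 < 4) then -1 else 0

lemma rotZ_mul (i : Fin 8) : rotZ i * (rotZ i).transpose = 1 := by
  revert i; decide

lemma rotZ_det (i : Fin 8) : (rotZ i).det = 1 := by
  fin_cases i <;> simp [rotZ, Matrix.det_fin_three]

lemma rotZ_trace (i j : Fin 8) : (rotZ i * (rotZ j).transpose).trace = trZ i j := by
  revert i j; decide

/-- The real rotation matrix. -/
noncomputable def rotR (i : Fin 8) : Matrix (Fin 3) (Fin 3) ℝ := (rotZ i).map (Int.castRingHom ℝ)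

lemma rotR_mul (i j : Fin 8) :
    rotR i * star (rotR j) = (rotZ i * (rotZ j).transpose).map (Int.castRingHom ℝ) := by
  rw [Matrix.map_mul]
  congr 1

lemma rotR_mem (i : Fin 8) : rotR i ∈ Matrix.specialOrthogonalGroup (Fin 3) ℝ := by
  rw [Matrix.mem_specialOrthogonalGroup_iff]
  constructor
  · rw [Matrix.mem_orthogonalGroup_iff]
    change rotR i * star (rotR i) = 1
    rw [rotR_mul, rotZ_mul]
    simp
  · have h := RingHom.map_det (Int.castRingHom ℝ) (rotZ i)
    rw [rotZ_det, map_one] at h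
    exact h.symm

lemma rotR_trace (i j : Fin 8) : (rotR i * star (rotR j)).trace = (trZ i j : ℝ) := by
  rw [rotR_mul, ← rotZ_trace]
  simp [Matrix.trace]

lemma arccos_neg_half : Real.arccos (-1 / 2) = 2 * Real.pi / 3 := by
  have h : Real.cos (2 * Real.pi / 3) = -1 / 2 := by
    rw [show 2 * Real.pi / 3 = Real.pi - Real.pi / 3 by ring, Real.cos_pi_sub,
      Real.cos_pi_div_three]
    norm_num
  rw [← h, Real.arccos_cos] <;> linarith [Real.pi_pos]

lemma arccos_trZ (i j : Fin 8) : Real.arccos (((trZ i j : ℤ) - 1 : ℝ) / 2) =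
    if i = j then 0 else if (i.1 < 4 ↔ j.1 < 4) then Real.pi else 2 * Real.pi / 3 := by
  unfold trZ
  split_ifs
  · norm_num
  · norm_num
  · rw [← arccos_neg_half]
    norm_num

open Real Finset in
/-- The bi-invariant distance `d(g,h) = arccos((tr(g h⁻¹) - 1)/2)` on `SO(3)` is NOT a
restricted negative definite kernel. -/
theorem SO3_dist_not_restricted_negdef :
    ∃ (n : ℕ) (g : Fin n → Matrix.specialOrthogonalGroup (Fin 3) ℝ) (ξ : Fin n → ℂ),
      (∑ i, ξ i) = 0 ∧
      0 < (∑ i, ∑ j,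
        ((arccos ((Matrix.trace ((g i * (g j)⁻¹ :
            Matrix.specialOrthogonalGroup (Fin 3) ℝ) : Matrix (Fin 3) (Fin 3) ℝ) - 1) / 2)
          : ℝ) : ℂ) * ξ i * (starRingEnd ℂ) (ξ j)).re := by
  refine ⟨8, fun i => ⟨rotR i, rotR_mem i⟩, fun i => if i.1 < 4 then 1 else -1, ?_, ?_⟩
  · simp [Fin.sum_univ_succ]
  · have key : ∀ i j : Fin 8, arccos ((Matrix.trace (((⟨rotR i, rotR_mem i⟩ :
        Matrix.specialOrthogonalGroup (Fin 3) ℝ) * (⟨rotR j, rotR_mem j⟩ :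
        Matrix.specialOrthogonalGroup (Fin 3) ℝ)⁻¹ :
            Matrix.specialOrthogonalGroup (Fin 3) ℝ) : Matrix (Fin 3) (Fin 3) ℝ) - 1) / 2) =
        if i = j then 0 else if (i.1 < 4 ↔ j.1 < 4) then Real.pi else 2 * Real.pi / 3 := by
      intro i j
      rw [← arccos_trZ, ← rotR_trace]
      rfl
    simp only [key]
    have e : ∀ i j : Fin 8, (((if i = j then 0 else if (i.1 < 4 ↔ j.1 < 4) then Real.pi
        else 2 * Real.pi / 3 : ℝ) : ℂ) * (if i.1 < 4 then 1 else -1) *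
        (starRingEnd ℂ) (if j.1 < 4 then 1 else -1)) =
        (((if i = j then 0 else if (i.1 < 4 ↔ j.1 < 4) then 3 else -2 : ℤ) * (Real.pi / 3) : ℝ) : ℂ) := by
      intro i j
      split_ifs <;> first | (exfalso; tauto) | (push_cast; simp; try ring)
    simp only [e]
    rw [show (∑ i : Fin 8, ∑ j : Fin 8, (((if i = j then 0 else if (i.1 < 4 ↔ j.1 < 4) then 3
        else -2 : ℤ) * (Real.pi / 3) : ℝ) : ℂ)) = (((∑ i : Fin 8, ∑ j : Fin 8, (if i = j then 0
        else if (i.1 < 4 ↔ j.1 < 4) then 3 else -2 : ℤ) : ℤ) * (Real.pi / 3) : ℝ) : ℂ) by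
      push_cast
      simp only [Finset.sum_mul]]
    rw [Complex.ofReal_re, show (∑ i : Fin 8, ∑ j : Fin 8, (if i = j then 0
        else if (i.1 < 4 ↔ j.1 < 4) then 3 else -2 : ℤ)) = 8 by decide]
    have := Real.pi_pos
    positivity
end
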